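/- arXiv:2009.08520 — 3 statements merged into one kernel-verified Lean document; each statement's English description precedes it below -/
import Mathlib

section
/- For every integer n ≥ 1, the graded ring R_n is concentrated in even degrees: for 0 ≤ k ≤ n the component (R_n)_{2k} is a free abelian group of rank C(2n,k) − C(2n,k−1) (with the convention C(2n,−1) = 0), and (R_n)_{2k} = 0 for every k > n. In particular, R_n is a free abelian group of total rank C(2n,n). -/
/-!
The basis of `R_n` consists of the squarefree monomials `X_S = ∏_{i ∈ S} X_i` for `S` *ballot*: every
initial segment of the variables contains at least as many indices outside `S` as inside.

*Spanning.* With a formal variable `z`, the relations say `∏ (1 + X_i z) = 1`. As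
`(1 + X_i z)(1 - X_i z) = 1`, this gives, for every index set `A` of size `d`,
`X_A = ± e_d(X_i : i ∉ A)` (`xs_eq_sum_compl`). If `S` is not ballot, some initial segment of length
`m` meets `S` in a set `A` with `2|A| > m`. Rewriting the factor `X_A` of `X_S` expresses `X_S` through
monomials that are larger in the colexicographic order, so the procedure terminates with ballot
monomials of the same degree (`xs_mem_span`).

*Independence.* By Hall's theorem each `i` in a ballot set `S` can be matched with some `p i < i`
outside `S`. Sending `X_i` to `t_i`, `X_{p i}` to `-t_i` and all other variables to `0` defines a ring
homomorphism from `R_n` to `ℤ[t]/(t_i²)`. The coefficient of `t_S` takes the value `1` on `X_S`, and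
vanishes on all other `X_{S'}` except some of smaller index sum (`exists_functional`). Hence ballot
monomials are linearly independent over `ℤ` (`linearIndependent_xs`).

*Counting.* The number of `k`-element ballot subsets of an `N`-set obeys Pascal's recursion as long as
`2k ≤ N` and is zero for `2k > N`. For `2k ≤ N + 1` it is therefore `C(N,k) - C(N,k-1)`
(`card_ballots_add`), and these numbers telescope (`sum_card_ballots`).
-/

/-!
Context: R_n = ℤ[X_1,…,X_{2n}]/I_n, I_n generated by the X_i^2 and the elementary
symmetric polynomials, graded with deg X_i = 2.  The degree-2k component of R_n is
the image of the homogeneous polynomials of standard degree k.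

Statement 1:  R_n is concentrated in even degrees; for 0 ≤ k ≤ n the component
(R_n)_{2k} is free abelian of rank C(2n,k) − C(2n,k−1) (with C(2n,−1) = 0), the
components (R_n)_{2k} vanish for k > n, and R_n is free abelian of total rank C(2n,n).
-/

open MvPolynomial

noncomputable section

/-- The ideal I_n generated by the squares of the variables and the elementary
symmetric polynomials in 2n variables. -/
def relIdeal (n : ℕ) : Ideal (MvPolynomial (Fin (2 * n)) ℤ) :=
  Ideal.span
    ((Set.range fun i : Fin (2 * n) => (X i : MvPolynomial (Fin (2 * n)) ℤ) ^ 2) ∪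
      {p | ∃ k : ℕ, 1 ≤ k ∧ k ≤ 2 * n ∧
        p = ∑ I ∈ Finset.powersetCard k (Finset.univ : Finset (Fin (2 * n))), ∏ i ∈ I, X i})

/-- The ring R_n = ℤ[X_1,…,X_{2n}]/I_n. -/
abbrev Rn (n : ℕ) := MvPolynomial (Fin (2 * n)) ℤ ⧸ relIdeal n

/-- The degree-2k homogeneous component of R_n (deg X_i = 2): the image of the
homogeneous polynomials of standard degree k. -/
def component (n k : ℕ) : AddSubgroup (Rn n) :=
  AddSubgroup.map (Ideal.Quotient.mk (relIdeal n)).toAddMonoidHom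
    (homogeneousSubmodule (Fin (2 * n)) ℤ k).toAddSubgroup

/-- The rank C(2n,k) − C(2n,k−1), with the convention C(2n,−1) = 0. -/
def rk (n k : ℕ) : ℕ :=
  Nat.choose (2 * n) k - (if k = 0 then 0 else Nat.choose (2 * n) (k - 1))

/-! ### Ballot sets -/

/-- A finite set of naturals is ballot if each initial segment `{0, …, m - 1}` contains at least
as many non-elements of `S` as elements. -/
def Ballot (S : Finset ℕ) : Prop := ∀ m, 2 * (S.filter (· < m)).card ≤ m

open Classical in
/-- The `k`-element ballot subsets of `{0, …, N - 1}`. -/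
def ballots (N k : ℕ) : Finset (Finset ℕ) :=
  (Finset.powersetCard k (Finset.range N)).filter Ballot

lemma mem_ballots {N k : ℕ} {S : Finset ℕ} :
    S ∈ ballots N k ↔ (S ⊆ Finset.range N ∧ S.card = k) ∧ Ballot S := by
  classical
  simp [ballots, Finset.mem_powersetCard]

lemma Ballot.two_mul_card_le {N : ℕ} {S : Finset ℕ} (h : Ballot S) (hS : S ⊆ Finset.range N) :
    2 * S.card ≤ N := by
  have := h N
  rwa [Finset.filter_true_of_mem fun x hx => Finset.mem_range.1 (hS hx)] at this

lemma ballots_zero (N : ℕ) : (ballots N 0).card = 1 := by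
  rw [Finset.card_eq_one]
  refine ⟨∅, ?_⟩
  ext S
  rw [mem_ballots, Finset.mem_singleton, Finset.card_eq_zero]
  constructor
  · exact fun h => h.1.2
  · rintro rfl
    simp [Ballot]

lemma ballots_eq_empty {N k : ℕ} (h : N < 2 * k) : ballots N k = ∅ := by
  rw [Finset.eq_empty_iff_forall_notMem]
  intro S hS
  obtain ⟨⟨h1, h2⟩, h3⟩ := mem_ballots.1 hS
  have := h3.two_mul_card_le h1
  omega

lemma ballot_insert {N : ℕ} {S : Finset ℕ} (hS : S ⊆ Finset.range N)
    (hc : 2 * (S.card + 1) ≤ N + 1) : Ballot (insert N S) ↔ Ballot S := by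
  have hN : N ∉ S := fun h => by simpa using hS h
  constructor
  · intro h m
    refine le_trans ?_ (h m)
    gcongr
    exact Finset.subset_insert _ _
  · intro h m
    rw [Finset.filter_insert]
    split_ifs with hm
    · rw [Finset.card_insert_of_notMem (by simp [hN])]
      have := Finset.card_filter_le S (· < m)
      omega
    · exact h m

/-- Pascal's recursion for ballot sets: a set either omits or contains the last point. -/
lemma card_ballots_succ {N k : ℕ} (h : 2 * (k + 1) ≤ N + 1) :
    (ballots (N + 1) (k + 1)).card = (ballots N (k + 1)).card + (ballots N k).card := by
  classical
  have hinj : Set.InjOn (insert N : Finset ℕ → Finset ℕ) (ballots N k) := by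
    intro S hS T hT hST
    have h1 : N ∉ S := fun h => by simpa using (mem_ballots.1 hS).1.1 h
    have h2 : N ∉ T := fun h => by simpa using (mem_ballots.1 hT).1.1 h
    rw [← Finset.erase_insert h1, ← Finset.erase_insert h2, hST]
  rw [← Finset.card_image_of_injOn hinj, ← Finset.card_union_of_disjoint]
  · congr 1
    unfold ballots
    rw [Finset.range_add_one, Finset.powersetCard_succ_insert Finset.notMem_range_self,
      Finset.filter_union]
    congr 1
    ext S
    simp only [Finset.mem_filter, Finset.mem_image, Finset.mem_powersetCard]
    constructor
    · rintro ⟨⟨T, ⟨h1, h2⟩, rfl⟩, h3⟩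
      exact ⟨T, ⟨⟨h1, h2⟩, (ballot_insert h1 (by omega)).1 h3⟩, rfl⟩
    · rintro ⟨T, ⟨⟨h1, h2⟩, h3⟩, rfl⟩
      exact ⟨⟨T, ⟨h1, h2⟩, rfl⟩, (ballot_insert h1 (by omega)).2 h3⟩
  · rw [Finset.disjoint_left]
    intro S hS hS'
    obtain ⟨T, -, rfl⟩ := Finset.mem_image.1 hS'
    simpa using (mem_ballots.1 hS).1.1 (Finset.mem_insert_self N T)

lemma card_ballots_add (N : ℕ) : ∀ k, 2 * (k + 1) ≤ N + 1 →
    (ballots N (k + 1)).card + N.choose k = N.choose (k + 1) := by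
  induction N with
  | zero => intro k hk; omega
  | succ N ih =>
    intro k hk
    rcases Nat.lt_or_ge (N + 1) (2 * (k + 1)) with h | h
    · rw [ballots_eq_empty h]
      have : N + 1 = 2 * k + 1 := by omega
      rw [this, Finset.card_empty, zero_add]
      exact (Nat.choose_symm_half k).symm
    · rw [card_ballots_succ h]
      have h1 := ih k (by omega)
      cases k with
      | zero =>
        have := ballots_zero N
        simp at h1 ⊢
        omega
      | succ k =>
        have h2 := ih k (by omega)
        have := Nat.choose_succ_succ N k
        have := Nat.choose_succ_succ N (k + 1)
        simp only [Nat.succ_eq_add_one] at *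
        omega

/-- The ballot numbers `C(N,k) - C(N,k-1)` telescope. -/
lemma sum_card_ballots (N : ℕ) : ∀ k, 2 * k ≤ N + 1 →
    ∑ j ∈ Finset.range (k + 1), (ballots N j).card = N.choose k := by
  intro k
  induction k with
  | zero => simp [ballots_zero]
  | succ k ih =>
    intro h
    rw [Finset.sum_range_succ, ih (by omega), add_comm]
    exact card_ballots_add N k h

/-! ### Relations between squarefree monomials -/

lemma coeff_prod_one_add {R ι : Type*} [CommRing R] (s : Finset ι) (x : ι → R) (k : ℕ) :
    (∏ i ∈ s, (1 + Polynomial.C (x i) * Polynomial.X)).coeff k =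
      ∑ I ∈ Finset.powersetCard k s, ∏ i ∈ I, x i := by
  classical
  rw [Finset.prod_one_add, Polynomial.finsetSum_coeff, Finset.powersetCard_eq_filter,
    Finset.sum_filter]
  refine Finset.sum_congr rfl fun I _ => ?_
  rw [Finset.prod_mul_distrib, Finset.prod_const, ← map_prod, Polynomial.coeff_C_mul_X_pow]
  simp only [eq_comm]

/-- The class of `X_S = ∏_{i ∈ S} X_i` in `R_n`. -/
def xs (n : ℕ) (S : Finset (Fin (2 * n))) : Rn n :=
  ∏ i ∈ S, Ideal.Quotient.mk (relIdeal n) (X i)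

lemma mk_X_sq (n : ℕ) (i : Fin (2 * n)) : (Ideal.Quotient.mk (relIdeal n) (X i)) ^ 2 = 0 := by
  rw [← map_pow, Ideal.Quotient.eq_zero_iff_mem]
  exact Ideal.subset_span (Or.inl ⟨i, rfl⟩)

/-- The elementary symmetric relations, collected in a generating polynomial. -/
lemma prod_one_add_mk_X (n : ℕ) :
    ∏ i : Fin (2 * n), (1 + Polynomial.C (Ideal.Quotient.mk (relIdeal n) (X i)) * Polynomial.X)
      = 1 := by
  ext k
  rw [coeff_prod_one_add]
  rcases Nat.eq_zero_or_pos k with rfl | hk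
  · simp
  rw [Polynomial.coeff_one, if_neg (by omega)]
  rcases Nat.lt_or_ge (2 * n) k with h | h
  · rw [Finset.powersetCard_eq_empty.2 (by simpa using h), Finset.sum_empty]
  · simp only [← map_prod, ← map_sum]
    rw [Ideal.Quotient.eq_zero_iff_mem]
    exact Ideal.subset_span (Or.inr ⟨k, hk, h, rfl⟩)

/-- In `R_n`, a squarefree monomial `X_A` of degree `d` equals, up to sign, the `d`-th elementary
symmetric polynomial in the complementary variables: compare coefficients in
`∏_{i ∉ A} (1 + X_i z) = ∏_{i ∈ A} (1 + X_i z)⁻¹ = ∏_{i ∈ A} (1 - X_i z)`. -/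
lemma xs_eq_sum_compl (n : ℕ) (A : Finset (Fin (2 * n))) :
    xs n A = (-1) ^ A.card * ∑ B ∈ Finset.powersetCard A.card Aᶜ, xs n B := by
  classical
  set x : Fin (2 * n) → Rn n := fun i => Ideal.Quotient.mk (relIdeal n) (X i) with hx
  have h1 := prod_one_add_mk_X n
  rw [← Finset.prod_mul_prod_compl A] at h1
  have h2 : (∏ i ∈ A, (1 + Polynomial.C (x i) * Polynomial.X)) *
      (∏ i ∈ A, (1 + Polynomial.C (-x i) * Polynomial.X)) = 1 := by
    rw [← Finset.prod_mul_distrib]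
    refine Finset.prod_eq_one fun i _ => ?_
    have : Polynomial.C (x i) ^ 2 = 0 := by rw [← map_pow, mk_X_sq, map_zero]
    rw [map_neg]
    linear_combination (- Polynomial.X ^ 2) * this
  have h3 : (∏ i ∈ Aᶜ, (1 + Polynomial.C (x i) * Polynomial.X)) =
      (∏ i ∈ A, (1 + Polynomial.C (-x i) * Polynomial.X)) :=
    left_inv_eq_right_inv (by rw [mul_comm (G := Polynomial (Rn n))]; exact h1) h2
  have h4 := congrArg (fun p => Polynomial.coeff p A.card) h3
  simp only [coeff_prod_one_add, Finset.powersetCard_self, Finset.sum_singleton] at h4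
  have h5 : ∑ B ∈ Finset.powersetCard A.card Aᶜ, xs n B = (-1) ^ A.card * xs n A :=
    h4.trans (Finset.prod_neg x)
  rcases neg_one_pow_eq_or (Rn n) A.card with h | h <;> rw [h5, h] <;> ring

/-! ### Spanning -/

/-- The squarefree exponents in `2n` variables indexing the basis: `k`-subsets of `Fin (2n)` that
are ballot as sets of naturals. -/
def std (n k : ℕ) : Set (Finset (Fin (2 * n))) :=
  {S | Ballot (S.map Fin.valEmbedding) ∧ S.card = k}

lemma xs_mul_eq_zero {n : ℕ} {B D : Finset (Fin (2 * n))} {i : Fin (2 * n)} (hB : i ∈ B)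
    (hD : i ∈ D) : xs n B * xs n D = 0 := by
  obtain ⟨b, hb⟩ := Finset.dvd_prod_of_mem
    (fun i => Ideal.Quotient.mk (relIdeal n) (X i)) hB
  obtain ⟨d, hd⟩ := Finset.dvd_prod_of_mem
    (fun i => Ideal.Quotient.mk (relIdeal n) (X i)) hD
  have := mk_X_sq n i
  unfold xs
  rw [hb, hd]
  linear_combination (b * d) * this

/-- Straightening. If `S` violates the ballot condition at `m`, then `A = S ∩ {0, …, m - 1}`
satisfies `2|A| > m`, so every `|A|`-set disjoint from `A` has an element `≥ m`; rewriting `X_A` by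
`xs_eq_sum_compl` thus expresses `X_S` through colexicographically larger monomials. The
colexicographic order is measured here by `∑ i ∈ S, 2 ^ i`. -/
lemma xs_mem_span (n : ℕ) (S : Finset (Fin (2 * n))) :
    xs n S ∈ Submodule.span ℤ (xs n '' std n S.card) := by
  classical
  let w : Finset (Fin (2 * n)) → ℕ := fun S => ∑ i ∈ S, 2 ^ (i : ℕ)
  have hw : ∀ (S : Finset (Fin (2 * n))) (m : ℕ), (∀ i ∈ S, (i : ℕ) < m) → w S < 2 ^ m := by
    intro S m h
    have := Nat.geomSum_lt (m := 2) (n := m) (s := S.map Fin.valEmbedding) le_rfl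
      (by simpa using h)
    simpa [w] using this
  induction hd : 2 ^ (2 * n) - w S using Nat.strong_induction_on generalizing S with
  | _ d ih =>
  by_cases hS : Ballot (S.map Fin.valEmbedding)
  · exact Submodule.subset_span ⟨S, ⟨hS, rfl⟩, rfl⟩
  unfold Ballot at hS
  push Not at hS
  obtain ⟨m, hm⟩ := hS
  rw [Finset.filter_map, Finset.card_map] at hm
  set A := S.filter (fun i : Fin (2 * n) => (i : ℕ) < m) with hA
  replace hm : m < 2 * A.card := hm
  set D := S.filter (fun i : Fin (2 * n) => ¬ (i : ℕ) < m) with hD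
  have hAD : A.card + D.card = S.card := Finset.card_filter_add_card_filter_not (fun i : Fin (2 * n) => (i : ℕ) < m)
  have hwS : w A + w D = w S := Finset.sum_filter_add_sum_filter_not _ _ _
  have hxS : xs n A * xs n D = xs n S := Finset.prod_filter_mul_prod_filter_not _ _ _
  have key : (∑ B ∈ Finset.powersetCard A.card Aᶜ, xs n B) * xs n D ∈
      Submodule.span ℤ (xs n '' std n S.card) := by
    rw [Finset.sum_mul]
    refine Submodule.sum_mem _ fun B hB => ?_
    obtain ⟨hB1, hB2⟩ := Finset.mem_powersetCard.1 hB
    by_cases hBD : Disjoint B D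
    · have h1 : xs n B * xs n D = xs n (B ∪ D) := (Finset.prod_union hBD).symm
      have h2 : (B ∪ D).card = S.card := by rw [Finset.card_union_of_disjoint hBD]; omega
      have h3 : w (B ∪ D) = w B + w D := Finset.sum_union hBD
      have hlast : ∃ i ∈ B, m ≤ (i : ℕ) := by
        by_contra! hcon
        have hdis : Disjoint A B := by
          rw [Finset.disjoint_left]
          intro i hi hi'
          exact Finset.mem_compl.1 (hB1 hi') hi
        have hsub : (A ∪ B).map Fin.valEmbedding ⊆ Finset.range m := by
          intro j hj
          obtain ⟨i, hi, rfl⟩ := Finset.mem_map.1 hj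
          rcases Finset.mem_union.1 hi with hi | hi
          · exact Finset.mem_range.2 (Finset.mem_filter.1 hi).2
          · exact Finset.mem_range.2 (hcon i hi)
        have := Finset.card_le_card hsub
        rw [Finset.card_map, Finset.card_union_of_disjoint hdis, Finset.card_range] at this
        omega
      obtain ⟨i, hi, him⟩ := hlast
      have h4 : w A < 2 ^ m := hw A m fun i hi => (Finset.mem_filter.1 hi).2
      have h5 : 2 ^ m ≤ w B := (Nat.pow_le_pow_right (by norm_num) him).trans
        (Finset.single_le_sum (f := fun i : Fin (2 * n) => 2 ^ (i : ℕ))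
          (fun _ _ => Nat.zero_le _) hi)
      have h6 := hw S (2 * n) fun i _ => i.2
      rw [h1, ← h2]
      exact ih _ (by omega) _ rfl
    · obtain ⟨i, hi, hi'⟩ := Finset.not_disjoint_iff.1 hBD
      rw [xs_mul_eq_zero hi hi']
      exact Submodule.zero_mem _
  rw [← hxS, xs_eq_sum_compl]
  rcases neg_one_pow_eq_or (Rn n) A.card with h | h
  · rwa [h, one_mul]
  · rw [h, neg_one_mul, neg_mul]
    exact Submodule.neg_mem _ key

/-- A monomial is either squarefree or zero in `R_n`. -/
lemma mk_monomial_mem_span (n : ℕ) (d : Fin (2 * n) →₀ ℕ) (c : ℤ) :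
    Ideal.Quotient.mk (relIdeal n) (monomial d c) ∈
      Submodule.span ℤ (xs n '' std n d.degree) := by
  classical
  have h0 : Ideal.Quotient.mk (relIdeal n) (monomial d c) =
      c • ∏ i ∈ d.support, (Ideal.Quotient.mk (relIdeal n) (X i)) ^ d i := by
    rw [monomial_eq, map_mul, zsmul_eq_mul, Finsupp.prod, map_prod]
    simp
  rw [h0]
  refine Submodule.smul_mem _ _ ?_
  by_cases h : ∀ i ∈ d.support, d i = 1
  · have h1 : ∏ i ∈ d.support, (Ideal.Quotient.mk (relIdeal n) (X i)) ^ d i = xs n d.support :=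
      Finset.prod_congr rfl fun i hi => by rw [h i hi, pow_one]
    have h2 : d.degree = d.support.card := by
      rw [Finsupp.degree_apply, Finset.sum_congr rfl h]
      simp
    rw [h1, h2]
    exact xs_mem_span n _
  · push Not at h
    obtain ⟨i, hi, hi1⟩ := h
    have : d i ≠ 0 := Finsupp.mem_support_iff.1 hi
    rw [Finset.prod_eq_zero hi]
    · exact Submodule.zero_mem _
    · obtain ⟨e, he⟩ := Nat.exists_eq_add_of_le (show 2 ≤ d i by omega)
      rw [he, pow_add, mk_X_sq, zero_mul]

/-- The components are spanned by standard monomials. -/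
lemma component_eq_span (n k : ℕ) :
    component n k = (Submodule.span ℤ (xs n '' std n k)).toAddSubgroup := by
  classical
  apply le_antisymm
  · rintro _ ⟨p, hp, rfl⟩
    have hp' : p.IsHomogeneous k := hp
    change Ideal.Quotient.mk (relIdeal n) p ∈ Submodule.span ℤ (xs n '' std n k)
    rw [p.as_sum, map_sum]
    refine Submodule.sum_mem _ fun d hd => ?_
    have hdk : d.degree = k := by
      have := hp' (mem_support_iff.1 hd)
      rwa [Finsupp.degree_eq_weight_one]
    rw [← hdk]
    exact mk_monomial_mem_span n d _
  · suffices Submodule.span ℤ (xs n '' std n k) ≤ AddSubgroup.toIntSubmodule (component n k) from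
      fun x hx => this hx
    rw [Submodule.span_le]
    rintro _ ⟨S, ⟨-, hS⟩, rfl⟩
    refine ⟨∏ i ∈ S, X i, ?_, map_prod (Ideal.Quotient.mk (relIdeal n)) _ _⟩
    have := IsHomogeneous.prod S (fun i => (X i : MvPolynomial (Fin (2 * n)) ℤ)) (fun _ => 1)
      fun i _ => isHomogeneous_X ℤ i
    change IsHomogeneous _ k
    simpa [hS] using this

lemma span_std_eq_top (n : ℕ) :
    Submodule.span ℤ (xs n '' {S | Ballot (S.map Fin.valEmbedding)}) = ⊤ := by
  rw [eq_top_iff]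
  rintro x -
  obtain ⟨p, rfl⟩ := Ideal.Quotient.mk_surjective x
  rw [p.as_sum, map_sum]
  refine Submodule.sum_mem _ fun d _ => ?_
  exact Submodule.span_mono (Set.image_mono fun S hS => hS.1) (mk_monomial_mem_span n d _)

/-! ### Linear independence -/

/-- Parenthesis matching: each element of a ballot set can be matched with a smaller non-element.
The ballot condition is Hall's condition for this matching. -/
lemma exists_partner {N : ℕ} {S : Finset (Fin N)} (hS : Ballot (S.map Fin.valEmbedding)) :
    ∃ p : Fin N → Fin N, Set.InjOn p S ∧ ∀ i ∈ S, p i ∉ S ∧ p i < i := by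
  classical
  let t : S → Finset (Fin N) := fun i => (Finset.Iic i.1).filter (· ∉ S)
  have hall : ∀ s : Finset S, s.card ≤ (s.biUnion t).card := by
    intro s
    rcases s.eq_empty_or_nonempty with rfl | hs
    · simp
    set i := s.max' hs with hi
    have h1 : (t i).card ≤ (s.biUnion t).card :=
      Finset.card_le_card (Finset.subset_biUnion_of_mem t (s.max'_mem hs))
    have h2 : s.card ≤ ((Finset.Iic i.1).filter (· ∈ S)).card := by
      rw [← Finset.card_map (Function.Embedding.subtype _)]
      refine Finset.card_le_card fun j hj => ?_
      obtain ⟨j, hjs, rfl⟩ := Finset.mem_map.1 hj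
      exact Finset.mem_filter.2 ⟨Finset.mem_Iic.2 (s.le_max' j hjs), j.2⟩
    have h3 : ((Finset.Iic i.1).filter (· ∈ S)).card + (t i).card = (Finset.Iic i.1).card :=
      Finset.card_filter_add_card_filter_not _
    rw [Fin.card_Iic] at h3
    have h4 := hS (i.1 + 1)
    rw [Finset.filter_map, Finset.card_map] at h4
    have h5 : ((Finset.Iic i.1).filter (· ∈ S)).card ≤
        (S.filter ((fun x : ℕ => x < i.1 + 1) ∘ Fin.valEmbedding)).card := by
      refine Finset.card_le_card fun j hj => ?_
      obtain ⟨hj1, hj2⟩ := Finset.mem_filter.1 hj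
      exact Finset.mem_filter.2 ⟨hj2, Nat.lt_succ_of_le (Fin.le_def.1 (Finset.mem_Iic.1 hj1))⟩
    omega
  obtain ⟨f, hf1, hf2⟩ := (Finset.all_card_le_biUnion_card_iff_exists_injective t).1 hall
  refine ⟨fun i => if h : i ∈ S then f ⟨i, h⟩ else i, ?_, ?_⟩
  · intro i hi j hj hij
    have hi' : i ∈ S := hi
    have hj' : j ∈ S := hj
    simp only [hi', hj', dif_pos] at hij
    exact congrArg Subtype.val (hf1 hij)
  · intro i hi
    simp only [hi, dif_pos]
    obtain ⟨h1, h2⟩ := Finset.mem_filter.1 (hf2 ⟨i, hi⟩)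
    refine ⟨h2, lt_of_le_of_ne (Finset.mem_Iic.1 h1) fun h => h2 ?_⟩
    rw [h]
    exact hi

/-- The exponent vector of `X_S`. -/
def expo {N : ℕ} (S : Finset (Fin N)) : Fin N →₀ ℕ := ∑ i ∈ S, Finsupp.single i 1

lemma expo_apply {N : ℕ} (S : Finset (Fin N)) (i : Fin N) :
    expo S i = if i ∈ S then 1 else 0 := by
  classical
  simp [expo, Finsupp.finsetSum_apply, Finsupp.single_apply]

lemma expo_injective {N : ℕ} : Function.Injective (expo (N := N)) := by
  intro S T h
  ext i
  have := DFunLike.congr_fun h i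
  rw [expo_apply, expo_apply] at this
  split_ifs at this <;> simp_all

/-- The ideal of squares of the variables. -/
def sqIdeal (N : ℕ) : Ideal (MvPolynomial (Fin N) ℤ) :=
  Ideal.span ((fun s => monomial s (1 : ℤ)) '' Set.range fun i : Fin N => Finsupp.single i 2)

lemma X_sq_mem_sqIdeal {N : ℕ} (i : Fin N) : (X i : MvPolynomial (Fin N) ℤ) ^ 2 ∈ sqIdeal N :=
  Ideal.subset_span ⟨_, ⟨i, rfl⟩, by rw [X_pow_eq_monomial]⟩

lemma coeff_expo_of_mem_sqIdeal {N : ℕ} {p : MvPolynomial (Fin N) ℤ} (hp : p ∈ sqIdeal N)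
    (S : Finset (Fin N)) : coeff (expo S) p = 0 := by
  by_contra h
  obtain ⟨_, ⟨i, rfl⟩, hi⟩ := mem_ideal_span_monomial_image.1 hp _ (mem_support_iff.2 h)
  have := hi i
  rw [expo_apply] at this
  simp at this
  split_ifs at this <;> omega

/-- Let `p` match `S` with points outside `S`. The ring homomorphism to `ℤ[t]/(t_i²)` sending
`X_i` to `t_i` and `X_{p i}` to `-t_i` for `i ∈ S`, and the other variables to `0`, kills `I_n`,
because `(1 + t_i z)(1 - t_i z) = 1`. The coefficient of `t_S` then gives a functional on `R_n`,
which is unitriangular on squarefree monomials: a monomial `X_{S'}` on which it does not vanish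
arises from `S` by replacing some `i` by `p i < i`. -/
lemma exists_functional {n : ℕ} {S : Finset (Fin (2 * n))}
    (hS : Ballot (S.map Fin.valEmbedding)) :
    ∃ g : MvPolynomial (Fin (2 * n)) ℤ →ₗ[ℤ] ℤ, (∀ q ∈ relIdeal n, g q = 0) ∧
      g (∏ i ∈ S, X i) = 1 ∧
      ∀ S' : Finset (Fin (2 * n)), g (∏ i ∈ S', X i) ≠ 0 →
        S' = S ∨ ∑ i ∈ S', (i : ℕ) < ∑ i ∈ S, (i : ℕ) := by
  classical
  obtain ⟨p, hp, hpS⟩ := exists_partner hS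
  obtain ⟨q, hq⟩ : ∃ q : Fin (2 * n) → Fin (2 * n), ∀ i ∈ S, q (p i) = i := by
    cases isEmpty_or_nonempty (Fin (2 * n))
    · exact ⟨id, fun i => isEmptyElim i⟩
    · exact ⟨Function.invFunOn p S, fun i hi => hp.leftInvOn_invFunOn hi⟩
  -- `X_j` is sent to `ε j * t_{r j}`.
  let r : Fin (2 * n) → Fin (2 * n) := fun j =>
    if j ∈ S then j else if j ∈ S.image p then q j else j
  let ε : Fin (2 * n) → ℤ := fun j => if j ∈ S then 1 else if j ∈ S.image p then -1 else 0
  have hr1 : ∀ i ∈ S, r i = i := fun i hi => if_pos hi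
  have hε1 : ∀ i ∈ S, ε i = 1 := fun i hi => if_pos hi
  have hr2 : ∀ i ∈ S, r (p i) = i := fun i hi => by
    simp only [r, (hpS i hi).1, if_false, Finset.mem_image_of_mem p hi, if_true]
    exact hq i hi
  have hε2 : ∀ i ∈ S, ε (p i) = -1 := fun i hi => by
    simp only [ε, (hpS i hi).1, if_false, Finset.mem_image_of_mem p hi, if_true]
  have hε3 : ∀ j, j ∉ S ∪ S.image p → ε j = 0 := fun j hj => by
    rw [Finset.mem_union, not_or] at hj
    simp only [ε, hj.1, hj.2, if_false]
  have hle : ∀ j, j ≤ r j := fun j => by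
    by_cases h1 : j ∈ S
    · exact (hr1 j h1).ge
    by_cases h2 : j ∈ S.image p
    · obtain ⟨i, hi, rfl⟩ := Finset.mem_image.1 h2
      rw [hr2 i hi]
      exact (hpS i hi).2.le
    · simp only [r, h1, h2, if_false, le_refl]
  let φ : MvPolynomial (Fin (2 * n)) ℤ →ₐ[ℤ] MvPolynomial (Fin (2 * n)) ℤ :=
    aeval fun j => C (ε j) * X (r j)
  have hφX : ∀ j, φ (X j) = C (ε j) * X (r j) := fun j => aeval_X _ _
  let x : Fin (2 * n) → MvPolynomial (Fin (2 * n)) ℤ ⧸ sqIdeal (2 * n) := fun j =>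
    Ideal.Quotient.mk _ (φ (X j))
  have hprod : ∏ j, (1 + Polynomial.C (x j) * Polynomial.X) = 1 := by
    rw [← Finset.prod_subset (Finset.subset_univ (S ∪ S.image p))]
    · rw [Finset.prod_union, Finset.prod_image hp, ← Finset.prod_mul_distrib]
      · refine Finset.prod_eq_one fun i hi => ?_
        have h1 : x (p i) = - x i := by
          simp only [x, hφX, hr1 i hi, hr2 i hi, hε1 i hi, hε2 i hi]
          simp
        have h2 : Polynomial.C (x i) ^ 2 = 0 := by
          rw [← map_pow, ← map_pow, hφX, hr1 i hi, hε1 i hi, C_1, one_mul,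
            Ideal.Quotient.eq_zero_iff_mem.2 (X_sq_mem_sqIdeal i), map_zero]
        rw [h1, map_neg]
        linear_combination (- Polynomial.X ^ 2) * h2
      · rw [Finset.disjoint_left]
        intro j hj hj'
        obtain ⟨i, hi, rfl⟩ := Finset.mem_image.1 hj'
        exact (hpS i hi).1 hj
    · intro j _ hj
      simp only [x, hφX, hε3 j hj]
      simp
  have hker : relIdeal n ≤ (sqIdeal (2 * n)).comap φ := by
    refine Ideal.span_le.2 ?_
    rintro _ (⟨i, rfl⟩ | ⟨k, hk, -, rfl⟩)
    · change φ (X i ^ 2) ∈ sqIdeal (2 * n)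
      rw [map_pow, hφX, mul_pow]
      exact Ideal.mul_mem_left _ _ (X_sq_mem_sqIdeal _)
    · change φ _ ∈ sqIdeal (2 * n)
      rw [← Ideal.Quotient.eq_zero_iff_mem]
      have h := congrArg (fun q => Polynomial.coeff q k) hprod
      simp only [coeff_prod_one_add, Polynomial.coeff_one] at h
      rw [if_neg (by omega)] at h
      simp only [map_sum, map_prod]
      exact h
  have hcoeff : ∀ S' : Finset (Fin (2 * n)), coeff (expo S) (φ (∏ i ∈ S', X i)) =
      (∏ i ∈ S', ε i) * if ∑ i ∈ S', Finsupp.single (r i) 1 = expo S then 1 else 0 := by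
    intro S'
    have : ∏ i ∈ S', (X (r i) : MvPolynomial (Fin (2 * n)) ℤ) =
        monomial (∑ i ∈ S', Finsupp.single (r i) 1) 1 := (monomial_sum_one _ _).symm
    rw [map_prod, Finset.prod_congr rfl fun i _ => hφX i, Finset.prod_mul_distrib, ← map_prod,
      this, coeff_C_mul, coeff_monomial]
  refine ⟨(lcoeff ℤ (expo S)).comp φ.toLinearMap, fun q hq =>
    coeff_expo_of_mem_sqIdeal (hker hq) S, ?_, fun S' hS' => ?_⟩
  · change coeff (expo S) (φ (∏ i ∈ S, X i)) = 1
    rw [hcoeff, Finset.prod_eq_one hε1, if_pos, one_mul]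
    exact Finset.sum_congr rfl fun i hi => by rw [hr1 i hi]
  · change coeff (expo S) (φ (∏ i ∈ S', X i)) ≠ 0 at hS'
    rw [hcoeff] at hS'
    have hexp : ∑ i ∈ S', Finsupp.single (r i) 1 = expo S := by
      by_contra h
      rw [if_neg h, mul_zero] at hS'
      exact hS' rfl
    have hwt := congrArg (Finsupp.weight fun i : Fin (2 * n) => (i : ℕ)) hexp
    simp only [expo, map_sum, Finsupp.weight_single, one_smul] at hwt
    have hle' : ∀ i ∈ S', (i : ℕ) ≤ (r i : ℕ) := fun i _ => hle i
    rcases (Finset.sum_le_sum hle').lt_or_eq with h | h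
    · exact Or.inr (hwt ▸ h)
    · left
      apply expo_injective
      rw [← hexp]
      refine Finset.sum_congr rfl fun i hi => ?_
      rw [← Fin.ext ((Finset.sum_eq_sum_iff_of_le hle').1 h i hi)]

/-- Triangularity of the functionals `exists_functional` yields independence: test a relation
against the functional of an index of minimal weight. -/
lemma linearIndependent_xs (n : ℕ) (P : Set (Finset (Fin (2 * n))))
    (hP : ∀ S ∈ P, Ballot (S.map Fin.valEmbedding)) :
    LinearIndependent ℤ fun S : P => xs n S := by
  classical
  rw [linearIndependent_iff']
  intro s c hc
  by_contra! hne
  obtain ⟨S, hS, hmin⟩ := Finset.exists_min_image (s.filter fun S => c S ≠ 0)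
    (fun S => ∑ i ∈ S.1, (i : ℕ)) (by
      obtain ⟨i, hi, hi'⟩ := hne
      exact ⟨i, Finset.mem_filter.2 ⟨hi, hi'⟩⟩)
  obtain ⟨hSs, hcS⟩ := Finset.mem_filter.1 hS
  obtain ⟨g, hg, hg1, hg2⟩ := exists_functional (hP S.1 S.2)
  have hmem : ∑ T ∈ s, c T • ∏ i ∈ T.1, X i ∈ relIdeal n := by
    rw [← Ideal.Quotient.eq_zero_iff_mem, map_sum, ← hc]
    refine Finset.sum_congr rfl fun T _ => ?_
    rw [map_zsmul, map_prod]
    rfl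
  have h := hg _ hmem
  rw [map_sum, Finset.sum_eq_single S] at h
  · rw [map_smul, hg1, smul_eq_mul, mul_one] at h
    exact hcS h
  · intro T hT hTS
    rw [map_smul, smul_eq_mul]
    by_contra h0
    obtain ⟨h1, h2⟩ := mul_ne_zero_iff.1 h0
    rcases hg2 _ h2 with h3 | h3
    · exact hTS (Subtype.ext h3)
    · exact absurd (hmin T (Finset.mem_filter.2 ⟨hT, h1⟩)) (not_le.2 h3)
  · exact fun h => absurd hSs h

/-! ### Free bases and ranks -/

/-- The span of a family of ballot monomials is free with that family as basis. -/
lemma nonempty_span_equiv (n : ℕ) (P : Set (Finset (Fin (2 * n))))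
    (hP : ∀ S ∈ P, Ballot (S.map Fin.valEmbedding)) :
    Nonempty (Submodule.span ℤ (xs n '' P) ≃+ (Fin P.ncard → ℤ)) := by
  have e := (Module.Basis.span (linearIndependent_xs n P hP)).reindex
    (Finite.equivFinOfCardEq (Nat.card_coe_set_eq P))
  have h : Set.range (fun S : P => xs n S) = xs n '' P := by
    rw [Set.image_eq_range]
  rw [← h]
  exact ⟨e.equivFun.toAddEquiv⟩

lemma ncard_std (n k : ℕ) : (std n k).ncard = (ballots (2 * n) k).card := by
  classical
  rw [← Set.ncard_image_of_injective _ (Finset.map_injective Fin.valEmbedding),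
    ← Set.ncard_coe_finset]
  congr 1
  ext S
  rw [Finset.mem_coe, mem_ballots]
  constructor
  · rintro ⟨T, ⟨h1, h2⟩, rfl⟩
    refine ⟨⟨?_, by rwa [Finset.card_map]⟩, h1⟩
    intro j hj
    obtain ⟨i, -, rfl⟩ := Finset.mem_map.1 hj
    exact Finset.mem_range.2 i.2
  · rintro ⟨⟨h1, h2⟩, h3⟩
    have hrange : S ⊆ (Finset.univ : Finset (Fin (2 * n))).map Fin.valEmbedding := fun j hj =>
      Finset.mem_map.2 ⟨⟨j, Finset.mem_range.1 (h1 hj)⟩, Finset.mem_univ _, rfl⟩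
    obtain ⟨T, -, rfl⟩ := Finset.subset_map_iff.1 hrange
    exact ⟨T, ⟨h3, by rwa [Finset.card_map] at h2⟩, rfl⟩

lemma ncard_all_std (n : ℕ) :
    {S : Finset (Fin (2 * n)) | Ballot (S.map Fin.valEmbedding)}.ncard =
      (2 * n).choose n := by
  classical
  rw [← sum_card_ballots (2 * n) n (by omega)]
  rw [Set.ncard_eq_toFinset_card', Finset.card_eq_sum_card_fiberwise (f := Finset.card)
    (t := Finset.range (n + 1))]
  · refine Finset.sum_congr rfl fun k _ => ?_
    rw [← ncard_std, ← Set.ncard_coe_finset]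
    congr 1
    ext S
    simp [std]
  · intro S hS
    have h1 : Ballot (S.map Fin.valEmbedding) := by simpa using hS
    have h2 := h1.two_mul_card_le (N := 2 * n) (by
      intro j hj
      obtain ⟨i, -, rfl⟩ := Finset.mem_map.1 hj
      exact Finset.mem_range.2 i.2)
    rw [Finset.card_map] at h2
    simp only [Finset.coe_range, Set.mem_Iio]
    omega

/-- For 0 ≤ k ≤ n, the degree-2k component of R_n is a free abelian
group of rank C(2n,k) − C(2n,k−1); the components vanish for k > n; and R_n itself is
a free abelian group of total rank C(2n,n). -/
theorem stmt1 (n : ℕ) (hn : 1 ≤ n) :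
    (∀ k : ℕ, k ≤ n → Nonempty ((component n k) ≃+ (Fin (rk n k) → ℤ))) ∧
    (∀ k : ℕ, n < k → component n k = ⊥) ∧
    Nonempty (Rn n ≃+ (Fin (Nat.choose (2 * n) n) → ℤ)) := by
  refine ⟨fun k hk => ?_, fun k hk => ?_, ?_⟩
  · have hrk : (std n k).ncard = rk n k := by
      rw [ncard_std, rk]
      cases k with
      | zero => simp [ballots_zero]
      | succ k =>
        have := card_ballots_add (2 * n) k (by omega)
        rw [if_neg (by omega), Nat.add_sub_cancel]
        omega
    rw [component_eq_span, ← hrk]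
    exact nonempty_span_equiv n (std n k) fun S hS => hS.1
  · have hstd : std n k = ∅ := by
      rw [← Set.ncard_eq_zero (Set.toFinite _), ncard_std, ballots_eq_empty (by omega),
        Finset.card_empty]
    rw [component_eq_span, hstd, Set.image_empty, Submodule.span_empty]
    rfl
  · have h := nonempty_span_equiv n {S | Ballot (S.map Fin.valEmbedding)} fun S hS => hS
    rw [span_std_eq_top, ncard_all_std] at h
    exact h.map fun e => Submodule.topEquiv.toAddEquiv.symm.trans e

end
end

section
/- Let N ≥ 2, let P be the set of bounded partitions, and let F be the free abelian group on the set P × P. For every 0 ≤ m ≤ N−2 and (d,e) ∈ P × P, define ψ^{[m]}(d,e) = Σ_{k=0}^{N−1−m} (d ∪ {N−1−m−k}, e ∪ {k}) ∈ F, where d ∪ {s} denotes the bounded partition obtained from d by adjoining a part of size s when s ≥ 1, and d ∪ {0} = d. Let S ⊆ F be the subgroup generated by all the elements ψ^{[m]}(d,e) for 0 ≤ m ≤ N−2 and (d,e) ∈ P × P. Then the homomorphism from the free abelian group on P to F/S sending each bounded partition d to the class of (d, ∅), where ∅ is the empty partition, is an isomorphism of abelian groups. -/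
/-!
Encode `(d, e)` as a monomial in commuting variables `x_i` (for the parts of `d`) and `y_j`
(for the parts of `e`), with `x_0 = y_0 = 1`. The relations say `∑_{k ≤ n} x_{n-k} y_k = 0`
for `1 ≤ n ≤ N - 1`, times an arbitrary monomial, and each of them can be solved for `y_n`.

* Surjectivity (`of_mem_range`): the `n`-th relation rewrites the class of `(d, e ∪ {n})` in terms
  of pairs whose second entry has smaller sum, so induction on that sum reaches the pairs `(d, ∅)`.
* Injectivity: substituting for `y_n` the polynomial `hPoly n` in the `x_i` that solves the
  relations gives a homomorphism from `F` to `ℤ[x_1, x_2, …]` killing `S` (`evalPair_psiEl`).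
  Its composite with `themap` sends `d` to the monomial of `d`, and distinct monomials are linearly
  independent (`lift_xProd_injective`).
-/

/-- The set of bounded partitions: finite multisets of positive integers with all
parts at most N−1. -/
def BP (N : ℕ) := {d : Multiset ℕ // ∀ x ∈ d, 0 < x ∧ x ≤ N - 1}

/-- The empty partition. -/
def emptyBP (N : ℕ) : BP N := ⟨0, by intro x hx; simp at hx⟩

/-- Adjoin a part of size s to a bounded partition (adjoining a part of size 0 is the
identity; only sizes 1 ≤ s ≤ N−1 are ever used). -/
def adjoin {N : ℕ} (d : BP N) (s : ℕ) : BP N :=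
  if h : 0 < s ∧ s ≤ N - 1 then
    ⟨d.1 + {s}, fun x hx => by
      rcases Multiset.mem_add.mp hx with h1 | h2
      · exact d.2 x h1
      · rw [Multiset.mem_singleton.mp h2]; exact h⟩
  else d

/-- The element ψ^{[m]}(d,e) = Σ_{k=0}^{N−1−m} (d ∪ {N−1−m−k}, e ∪ {k}) of the free
abelian group on P × P. -/
def psiEl (N m : ℕ) (de : BP N × BP N) : FreeAbelianGroup (BP N × BP N) :=
  ∑ k ∈ Finset.range (N - m),
    FreeAbelianGroup.of (adjoin de.1 (N - 1 - m - k), adjoin de.2 k)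

/-- The subgroup S generated by the elements ψ^{[m]}(d,e), 0 ≤ m ≤ N−2. -/
def Srel (N : ℕ) : AddSubgroup (FreeAbelianGroup (BP N × BP N)) :=
  AddSubgroup.closure {z | ∃ m : ℕ, m + 2 ≤ N ∧ ∃ de : BP N × BP N, z = psiEl N m de}

/-- The homomorphism from the free abelian group on P to F/S sending a bounded
partition d to the class of (d, ∅). -/
def themap (N : ℕ) : FreeAbelianGroup (BP N) →+ FreeAbelianGroup (BP N × BP N) ⧸ Srel N :=
  FreeAbelianGroup.lift fun d =>
    QuotientAddGroup.mk' (Srel N) (FreeAbelianGroup.of (d, emptyBP N))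

/-- The variable `x_n` of `ℤ[x_1, x_2, …]`, with the convention `x_0 = 1`. -/
noncomputable def xPoly (n : ℕ) : MvPolynomial ℕ ℤ := if n = 0 then 1 else MvPolynomial.X n

/-- The polynomials determined by `h_0 = 1` and `∑_{k ≤ n} x_{n-k} h_k = 0` for `n ≥ 1`, that is,
the coefficients of the inverse of the power series `∑ x_n t ^ n`. -/
noncomputable def hPoly (n : ℕ) : MvPolynomial ℕ ℤ :=
  if n = 0 then 1 else -∑ k : Fin n, xPoly (n - k) * hPoly k
termination_by n
decreasing_by exact k.2

lemma xPoly_zero : xPoly 0 = 1 := by simp [xPoly]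

lemma hPoly_zero : hPoly 0 = 1 := by rw [hPoly]; simp

lemma sum_xPoly_mul_hPoly {n : ℕ} (hn : n ≠ 0) :
    ∑ k ∈ Finset.range (n + 1), xPoly (n - k) * hPoly k = 0 := by
  rw [Finset.sum_range_succ, Nat.sub_self, xPoly_zero, one_mul]
  conv_lhs => rw [hPoly]
  rw [if_neg hn, Finset.sum_range]
  simp

lemma adjoin_zero {N : ℕ} (d : BP N) : adjoin d 0 = d := by simp [adjoin]

lemma adjoin_val {N : ℕ} (d : BP N) {s : ℕ} (h0 : 0 < s) (hs : s ≤ N - 1) :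
    (adjoin d s).1 = d.1 + {s} := by simp [adjoin, h0, hs]

lemma prod_map_adjoin {N : ℕ} (w : ℕ → MvPolynomial ℕ ℤ) (hw : w 0 = 1) (d : BP N) {s : ℕ}
    (hs : s ≤ N - 1) : ((adjoin d s).1.map w).prod = w s * (d.1.map w).prod := by
  rcases Nat.eq_zero_or_pos s with rfl | h0
  · rw [adjoin_zero, hw, one_mul]
  · rw [adjoin_val d h0 hs]
    simp [mul_comm]

/-- The homomorphism from the free abelian group on pairs to `ℤ[x_1, x_2, …]` sending `(d, e)` to
`∏_{i ∈ d} x_i * ∏_{j ∈ e} h_j`. -/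
noncomputable def evalPair (N : ℕ) : FreeAbelianGroup (BP N × BP N) →+ MvPolynomial ℕ ℤ :=
  FreeAbelianGroup.lift fun p => (p.1.1.map xPoly).prod * (p.2.1.map hPoly).prod

lemma evalPair_psiEl {N m : ℕ} (hm : m + 2 ≤ N) (p : BP N × BP N) :
    evalPair N (psiEl N m p) = 0 := by
  have key : ∀ k ∈ Finset.range (N - m),
      evalPair N (FreeAbelianGroup.of (adjoin p.1 (N - 1 - m - k), adjoin p.2 k)) =
      (xPoly (N - 1 - m - k) * hPoly k) *
        ((p.1.1.map xPoly).prod * (p.2.1.map hPoly).prod) := by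
    intro k hk
    rw [Finset.mem_range] at hk
    rw [evalPair, FreeAbelianGroup.lift_apply_of, prod_map_adjoin _ xPoly_zero _ (by omega),
      prod_map_adjoin _ hPoly_zero _ (by omega)]
    ring
  rw [psiEl, map_sum, Finset.sum_congr rfl key, ← Finset.sum_mul,
    show N - m = (N - 1 - m) + 1 by omega, sum_xPoly_mul_hPoly (by omega), zero_mul]

lemma Srel_le_ker (N : ℕ) : Srel N ≤ (evalPair N).ker := by
  rw [Srel, AddSubgroup.closure_le]
  rintro z ⟨m, hm, p, rfl⟩
  exact evalPair_psiEl hm p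

lemma prod_map_xPoly {N : ℕ} (d : BP N) :
    (d.1.map xPoly).prod = MvPolynomial.monomial (Multiset.toFinsupp d.1) 1 := by
  have h1 : d.1.map xPoly = d.1.map MvPolynomial.X :=
    Multiset.map_congr rfl fun x hx => by simp [xPoly, (d.2 x hx).1.ne']
  rw [h1]
  generalize d.1 = s
  induction s using Multiset.induction_on with
  | empty => simp
  | cons a s ih =>
    rw [Multiset.map_cons, Multiset.prod_cons, ih, ← Multiset.singleton_add, map_add,
      Multiset.toFinsupp_singleton, MvPolynomial.X, MvPolynomial.monomial_mul, one_mul]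

lemma lift_xProd_injective (N : ℕ) :
    Function.Injective
      (FreeAbelianGroup.lift fun d : BP N => (d.1.map xPoly).prod) := by
  have hli : LinearIndependent ℤ fun d : BP N => (d.1.map xPoly).prod := by
    have := (MvPolynomial.basisMonomials ℕ ℤ).linearIndependent.comp
      (fun d : BP N => Multiset.toFinsupp d.1)
      (Multiset.toFinsupp.injective.comp Subtype.val_injective)
    have hfun : (fun d : BP N => (d.1.map xPoly).prod) =
        MvPolynomial.basisMonomials ℕ ℤ ∘ fun d : BP N => Multiset.toFinsupp d.1 := by
      funext d
      simp [prod_map_xPoly]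
    rw [hfun]
    -- `convert` identifies the two `ℤ`-module structures on the polynomial ring.
    convert this using 1
  have heq : (FreeAbelianGroup.lift fun d : BP N => (d.1.map xPoly).prod) =
      (Finsupp.linearCombination ℤ fun d : BP N => (d.1.map xPoly).prod).toAddMonoidHom.comp
        FreeAbelianGroup.toFinsupp := by
    ext d
    simp
  rw [heq]
  rw [AddMonoidHom.coe_comp]
  exact Function.Injective.comp hli (FreeAbelianGroup.equivFinsupp (BP N)).injective

/-- The class of `(d, e ∪ {n})` is minus the sum of those of `(d ∪ {n - k}, e ∪ {k})`, `k < n`,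
and the parts of `e ∪ {k}` have a smaller sum than those of `e ∪ {n}`. -/
lemma of_mem_range {N : ℕ} (d e : BP N) :
    QuotientAddGroup.mk' (Srel N) (FreeAbelianGroup.of (d, e)) ∈ (themap N).range := by
  induction hs : e.1.sum using Nat.strong_induction_on generalizing d e with
  | _ t ih =>
  subst hs
  rcases Multiset.empty_or_exists_mem e.1 with he | ⟨n, hn⟩
  · refine ⟨FreeAbelianGroup.of d, ?_⟩
    rw [themap, FreeAbelianGroup.lift_apply_of, show e = emptyBP N from Subtype.ext he]
  · obtain ⟨hn0, hnN⟩ := e.2 n hn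
    obtain ⟨s, hs⟩ := Multiset.exists_cons_of_mem hn
    let e' : BP N := ⟨s, fun x hx => e.2 x (by rw [hs]; exact Multiset.mem_cons_of_mem hx)⟩
    have hee : adjoin e' n = e :=
      Subtype.ext (by rw [adjoin_val e' hn0 hnN, hs, add_comm, Multiset.singleton_add])
    -- The relation among the generators whose top part is `n` has index `m = N - 1 - n`.
    have hrel : QuotientAddGroup.mk' (Srel N) (psiEl N (N - 1 - n) (d, e')) = 0 :=
      (QuotientAddGroup.eq_zero_iff _).2
        (AddSubgroup.subset_closure ⟨N - 1 - n, by omega, (d, e'), rfl⟩)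
    rw [psiEl, show N - (N - 1 - n) = n + 1 by omega, show N - 1 - (N - 1 - n) = n by omega,
      Finset.sum_range_succ, map_add, Nat.sub_self, adjoin_zero, hee] at hrel
    rw [eq_neg_of_add_eq_zero_right hrel, map_sum]
    refine neg_mem (sum_mem fun k hk => ?_)
    rw [Finset.mem_range] at hk
    refine ih _ ?_ _ _ rfl
    have hsum : e.1.sum = n + s.sum := by rw [hs, Multiset.sum_cons]
    rcases Nat.eq_zero_or_pos k with rfl | hk0
    · rw [adjoin_zero, hsum]
      exact Nat.lt_add_of_pos_left hn0
    · rw [adjoin_val e' hk0 (by omega), hsum, Multiset.sum_add, Multiset.sum_singleton]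
      change s.sum + k < _
      omega

/-- The homomorphism FreeAbelianGroup P → F/S, d ↦ [(d,∅)], is an
isomorphism of abelian groups. -/
theorem stmt8 (N : ℕ) (hN : 2 ≤ N) : Function.Bijective (themap N) := by
  constructor
  · have hcomp : (QuotientAddGroup.lift (Srel N) (evalPair N) (Srel_le_ker N)).comp (themap N) =
        FreeAbelianGroup.lift fun d : BP N => (d.1.map xPoly).prod := by
      ext d
      simp [themap, evalPair, emptyBP]
    have hinj := lift_xProd_injective N
    rw [← hcomp] at hinj
    exact Function.Injective.of_comp hinj
  · intro y
    obtain ⟨z, rfl⟩ := QuotientAddGroup.mk'_surjective (Srel N) y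
    change _ ∈ (themap N).range
    induction z using FreeAbelianGroup.induction_on with
    | zero => rw [map_zero]; exact zero_mem _
    | of p => exact of_mem_range p.1 p.2
    | neg p h => rw [map_neg]; exact neg_mem h
    | add x y hx hy => rw [map_add]; exact add_mem hx hy
end

section
/- Let Q be the quotient of the direct sum ⊕_{r∈ℕ} M_r by the subgroup generated by the elements σ·v − v (for all r ∈ ℕ, v ∈ M_r and σ ∈ S_{r+a} × S_{r+b}), the elements ψ^{[m]}(v) for all v ∈ M_r and 0 ≤ m ≤ N−2, and the elements ψ^{[N−1]}(v) − v for all v ∈ M_r. All of these generators are homogeneous, so Q inherits a grading. Then Q is a free abelian group concentrated in non-positive even degrees, and for every q ≥ 0 the degree −2q component of Q is free abelian of rank P_{N−1}(q), the number of partitions of q into parts of size at most N−1. In particular, Q is independent of the choice of α up to graded isomorphism. -/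
/-!
The coinvariants of `A^{⊗n}` under `S_n` are the degree `n` polynomials in variables
`x_0, …, x_{N-1}`, where `x_i` stands for a tensor factor `X^{N-1-i}` of the first group; write
`y_j` for the second group. Modulo permutations, `⊕ M_r` is therefore the part of `ℤ[x, y]` of
bidegrees `(r + a, r + b)`, a monomial having degree `-2` times the sum of its indices, and
`ψ^{[N-1-n]}` is multiplication by `∑_{i+j=n} x_i y_j`. The relations thus say that
`x(t) * y(t) = 1` modulo `t^N` for `x(t) = ∑ x_i t^i` and `y(t) = ∑ y_j t^j`. Hence `x_0` is
invertible, the `y_j` are determined by the `x_i`, and `Q` is the part of weight `α` of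
`ℤ[x_0^{±1}, x_1, …, x_{N-1}]`, which is `ℤ[z_1, …, z_{N-1}]` with `z_i = x_i / x_0` of degree
`-2i`, up to a power of `x_0`, which has degree `0`. Its monomials of degree `-2q` are the
partitions of `q` with parts at most `N - 1`.

In the proof, a monomial of `M_r` is replaced by its pair of multisets of indices `i`, `j`.
The map `phi : Q → ℤ[z]` puts `x_0 = y_0 = 1`, `x_i = z_i` and sends `y_j` to the coefficient
`w_j` of `1 / z(t)`; `theta : ℤ[z] → Q` sends `z^c` to the class of `x^c x_0^a y_0^{|c| + b}`.
That `phi ∘ theta` is the identity is immediate; `theta ∘ phi` is the identity by `cls_eq_theta`,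
which eliminates the `y_j` with `j > 0` one step at a time, by induction on the sum of their
indices. Both maps respect the gradings (`map_Qcomp`), the target being independent of `α`.
-/

/-!
Context: Let N ≥ 1, A = ℤ[X]/(X^N), α ∈ ℤ, a = max(−α,0), b = max(α,0), and for
r ∈ ℕ let M_r = A^{⊗(r+a)} ⊗ A^{⊗(r+b)}.  Since A^{⊗j} is free abelian on the
monomials X^{d_1}⊗⋯⊗X^{d_j} with 0 ≤ d_i ≤ N−1, we model M_r as the free abelian
group on the index set (Fin (r+a) → Fin N) × (Fin (r+b) → Fin N) of exponent
vectors.  The monomial (d,e) has degree 2(Σd + Σe) − (N−1)(4r+2a+2b).  The group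
S_{r+a} × S_{r+b} acts by permuting exponents, and ψ^{[m]} : M_r → M_{r+1} sends the
monomial (d,e) to Σ_{k=0}^{N−1−m} (d·X^{k+m}, e·X^{N−1−k}) (appending one exponent to
each factor), extended linearly.

Statement 9:  Let Q be the quotient of ⊕_r M_r by the subgroup generated by σ·v − v,
ψ^{[m]}(v) for m ≤ N−2, and ψ^{[N−1]}(v) − v, with its inherited grading.  Then Q is
free abelian, concentrated in non-positive even degrees, its degree −2q component is
free abelian of rank P_{N−1}(q) (the number of partitions of q into parts ≤ N−1),
and consequently Q is independent of α up to graded isomorphism.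
-/

open FreeAbelianGroup

noncomputable section

/-- a = max(−α, 0). -/
abbrev na (α : ℤ) : ℕ := (-α).toNat

/-- b = max(α, 0). -/
abbrev nb (α : ℤ) : ℕ := α.toNat

/-- Exponent vectors of monomials of M_r = A^{⊗(r+a)} ⊗ A^{⊗(r+b)}. -/
abbrev Idx (N : ℕ) (α : ℤ) (r : ℕ) :=
  (Fin (r + na α) → Fin N) × (Fin (r + nb α) → Fin N)

/-- M_r, modelled as the free abelian group on its monomial basis. -/
abbrev M (N : ℕ) (α : ℤ) (r : ℕ) := FreeAbelianGroup (Idx N α r)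

/-- The direct sum ⊕_{r∈ℕ} M_r, modelled as the free abelian group on the disjoint
union of the monomial bases. -/
abbrev T (N : ℕ) (α : ℤ) := FreeAbelianGroup ((r : ℕ) × Idx N α r)

/-- The inclusion M_r → ⊕_r M_r. -/
def incl (N : ℕ) (α : ℤ) (r : ℕ) : M N α r →+ T N α :=
  FreeAbelianGroup.lift fun x => FreeAbelianGroup.of ⟨r, x⟩

/-- The action of σ ∈ S_{r+a} × S_{r+b} on M_r, permuting the two groups of tensor
factors separately. -/
def permMap (N : ℕ) (α : ℤ) (r : ℕ)
    (σ : Equiv.Perm (Fin (r + na α)) × Equiv.Perm (Fin (r + nb α))) :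
    M N α r →+ M N α r :=
  FreeAbelianGroup.lift fun de => FreeAbelianGroup.of (de.1 ∘ σ.1, de.2 ∘ σ.2)

/-- The value of ψ^{[m]} on the monomial (d,e) of M_r:
Σ_{k=0}^{N−1−m} (d ⊗ X^{k+m}, e ⊗ X^{N−1−k}), viewed in ⊕_r M_r. -/
def psiIdx (N : ℕ) (α : ℤ) (r m : ℕ) (de : Idx N α r) : T N α :=
  ∑ k : Fin (N - m),
    FreeAbelianGroup.of
      ⟨r + 1,
        ((Fin.snoc de.1 (⟨k.1 + m, by have := k.isLt; omega⟩ : Fin N)) ∘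
           (Fin.cast (by omega) : Fin (r + 1 + na α) → Fin (r + na α + 1)),
         (Fin.snoc de.2 (⟨N - 1 - k.1, by have := k.isLt; omega⟩ : Fin N)) ∘
           (Fin.cast (by omega) : Fin (r + 1 + nb α) → Fin (r + nb α + 1)))⟩

/-- The map ψ^{[m]} : M_r → ⊕_r M_r (landing in the summand M_{r+1}). -/
def psi (N : ℕ) (α : ℤ) (r m : ℕ) : M N α r →+ T N α :=
  FreeAbelianGroup.lift (psiIdx N α r m)

/-- The subgroup of relations: σ·v − v for v ∈ M_r and σ ∈ S_{r+a} × S_{r+b};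
ψ^{[m]}(v) for v ∈ M_r and 0 ≤ m ≤ N−2; and ψ^{[N−1]}(v) − v for v ∈ M_r. -/
def rels (N : ℕ) (α : ℤ) : AddSubgroup (T N α) :=
  AddSubgroup.closure
    ({z | ∃ (r : ℕ) (σ : Equiv.Perm (Fin (r + na α)) × Equiv.Perm (Fin (r + nb α)))
        (v : M N α r), z = incl N α r (permMap N α r σ v) - incl N α r v} ∪
     {z | ∃ (r m : ℕ) (v : M N α r), m + 2 ≤ N ∧ z = psi N α r m v} ∪
     {z | ∃ (r : ℕ) (v : M N α r), z = psi N α r (N - 1) v - incl N α r v})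

/-- The quotient Q. -/
abbrev Q (N : ℕ) (α : ℤ) := T N α ⧸ rels N α

/-- The degree of a monomial: 2(Σ_i d_i + Σ_j e_j) − (N−1)(4r + 2a + 2b). -/
def deg (N : ℕ) (α : ℤ) (x : (r : ℕ) × Idx N α r) : ℤ :=
  2 * ((∑ i, ((x.2.1 i : ℕ) : ℤ)) + ∑ j, ((x.2.2 j : ℕ) : ℤ)) -
    ((N : ℤ) - 1) * (4 * x.1 + 2 * na α + 2 * nb α)

/-- The degree-j homogeneous component of ⊕_r M_r: the subgroup generated by the
monomials of degree j. -/
def Tcomp (N : ℕ) (α : ℤ) (j : ℤ) : AddSubgroup (T N α) :=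
  AddSubgroup.closure {z | ∃ x : (r : ℕ) × Idx N α r, deg N α x = j ∧ z = FreeAbelianGroup.of x}

/-- The degree-j component of Q: the image of the degree-j component of ⊕_r M_r
(all the relation generators are homogeneous, so this defines a grading on Q). -/
def Qcomp (N : ℕ) (α : ℤ) (j : ℤ) : AddSubgroup (Q N α) :=
  (Tcomp N α j).map (QuotientAddGroup.mk' (rels N α))

/-- P_{N−1}(q): the number of partitions of q into parts of size at most N−1. -/
def PN (N q : ℕ) : ℕ := Nat.card {p : Nat.Partition q // ∀ x ∈ p.parts, x ≤ N - 1}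

/-! ### Monomials of `M_r` as pairs of multisets -/

/-- The multiset of complementary exponents `N - 1 - f i` of a monomial. In this normalisation the
top power `X^{N-1}` corresponds to `0`, and a tensor factor with complementary exponent `i` has
degree `-2 * i`. -/
def codeg {N n : ℕ} (f : Fin n → Fin N) : Multiset ℕ :=
  ((List.ofFn fun i => N - 1 - (f i : ℕ) : List ℕ) : Multiset ℕ)

lemma card_codeg {N n : ℕ} (f : Fin n → Fin N) : (codeg f).card = n := by
  simp [codeg]

lemma lt_of_mem_codeg {N n : ℕ} (f : Fin n → Fin N) {i : ℕ} (hi : i ∈ codeg f) : i < N := by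
  simp only [codeg, Multiset.mem_coe, List.mem_ofFn] at hi
  obtain ⟨j, rfl⟩ := hi
  have := (f j).isLt
  omega

lemma codeg_comp_perm {N n : ℕ} (f : Fin n → Fin N) (σ : Equiv.Perm (Fin n)) :
    codeg (f ∘ σ) = codeg f :=
  Multiset.coe_eq_coe.2 (σ.ofFn_comp_perm fun i => N - 1 - (f i : ℕ))

lemma codeg_snoc {N n n' : ℕ} (f : Fin n → Fin N) (a : Fin N) (h : n' = n + 1) :
    codeg ((Fin.snoc f a : Fin (n + 1) → Fin N) ∘ (Fin.cast h : Fin n' → Fin (n + 1))) =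
      (N - 1 - (a : ℕ)) ::ₘ codeg f := by
  subst h
  simp only [codeg, Function.comp_apply, Fin.cast_eq_self]
  rw [List.ofFn_succ', List.concat_eq_append, ← Multiset.coe_add, add_comm]
  simp

lemma sum_codeg {N n : ℕ} (f : Fin n → Fin N) :
    ((codeg f).sum : ℤ) = n * ((N : ℤ) - 1) - ∑ i, ((f i : ℕ) : ℤ) := by
  simp only [codeg, Multiset.sum_coe, List.sum_ofFn]
  push_cast
  rw [Finset.sum_congr rfl (g := fun i => ((N : ℤ) - 1) - ((f i : ℕ) : ℤ))]
  · simp [Finset.sum_sub_distrib, mul_sub]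
  · intro i _
    have := (f i).isLt
    omega

/-- Two monomials with the same multiset of exponents differ by a permutation of the factors:
sort both. -/
lemma exists_perm_of_codeg_eq {N n : ℕ} (f g : Fin n → Fin N) (h : codeg f = codeg g) :
    ∃ σ : Equiv.Perm (Fin n), f ∘ σ = g := by
  set f' : Fin n → ℕ := fun i => N - 1 - (f i : ℕ) with hf'
  set g' : Fin n → ℕ := fun i => N - 1 - (g i : ℕ) with hg'
  have hp : (List.ofFn f').Perm (List.ofFn g') := Multiset.coe_eq_coe.1 h
  have hs : f' ∘ Tuple.sort f' = g' ∘ Tuple.sort g' :=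
    List.ofFn_injective <|
      ((((Tuple.sort f').ofFn_comp_perm f').trans hp).trans
        ((Tuple.sort g').ofFn_comp_perm g').symm).eq_of_pairwise'
      (Tuple.monotone_sort f').sortedLE_ofFn.pairwise
      (Tuple.monotone_sort g').sortedLE_ofFn.pairwise
  refine ⟨(Tuple.sort g').symm.trans (Tuple.sort f'), ?_⟩
  funext i
  have := congrFun hs ((Tuple.sort g').symm i)
  simp only [hf', hg', Function.comp_apply, Equiv.apply_symm_apply] at this
  simp only [Function.comp_apply, Equiv.trans_apply]
  have h1 := (f (Tuple.sort f' ((Tuple.sort g').symm i))).isLt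
  have h2 := (g i).isLt
  apply Fin.ext
  simp only [hf', hg'] at h1 ⊢
  omega

lemma exists_codeg_eq {N n : ℕ} (D : Multiset ℕ) (hD : ∀ i ∈ D, i < N) (hn : D.card = n) :
    ∃ f : Fin n → Fin N, codeg f = D := by
  induction D using Quotient.inductionOn with
  | h l =>
    obtain rfl : l.length = n := hn
    refine ⟨fun i => ⟨N - 1 - l.get i, ?_⟩, ?_⟩
    · have := hD (l.get i) (by simp)
      omega
    · rw [codeg]
      congr 1
      conv_rhs => rw [← List.ofFn_get l]
      congr 1
      funext i
      have := hD (l.get i) (by simp)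
      simp only
      omega

lemma nb_eq (α : ℤ) : (nb α : ℤ) = na α + α := by
  simp only [na, nb]
  omega

/-- The pairs of multisets that come from a monomial of some `M_r`. -/
def Valid (N : ℕ) (α : ℤ) (D E : Multiset ℕ) : Prop :=
  (∀ i ∈ D, i < N) ∧ (∀ i ∈ E, i < N) ∧ (E.card : ℤ) = D.card + α

lemma Valid.cons {N : ℕ} {α : ℤ} {D E : Multiset ℕ} (h : Valid N α D E) {i j : ℕ}
    (hi : i < N) (hj : j < N) : Valid N α (i ::ₘ D) (j ::ₘ E) := by
  obtain ⟨h1, h2, h3⟩ := h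
  refine ⟨?_, ?_, ?_⟩
  · simpa [hi] using h1
  · simpa [hj] using h2
  · simp only [Multiset.card_cons]
    push_cast
    omega

lemma valid_codeg {N : ℕ} {α : ℤ} (x : (r : ℕ) × Idx N α r) :
    Valid N α (codeg x.2.1) (codeg x.2.2) := by
  refine ⟨fun i => lt_of_mem_codeg _, fun i => lt_of_mem_codeg _, ?_⟩
  simp only [card_codeg]
  have := nb_eq α
  omega

lemma Valid.exists_eq {N : ℕ} {α : ℤ} {D E : Multiset ℕ} (h : Valid N α D E) :
    ∃ x : (r : ℕ) × Idx N α r, codeg x.2.1 = D ∧ codeg x.2.2 = E := by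
  obtain ⟨h1, h2, h3⟩ := h
  have := nb_eq α
  -- The truncated subtraction below is harmless.
  have hle : na α ≤ D.card := by
    simp only [na]
    omega
  obtain ⟨f, hf⟩ := exists_codeg_eq (n := (D.card - na α) + na α) D h1 (by omega)
  obtain ⟨g, hg⟩ := exists_codeg_eq (n := (D.card - na α) + nb α) E h2 (by omega)
  exact ⟨⟨D.card - na α, f, g⟩, hf, hg⟩

lemma deg_eq {N : ℕ} {α : ℤ} (x : (r : ℕ) × Idx N α r) :
    deg N α x = -(2 * (((codeg x.2.1).sum + (codeg x.2.2).sum : ℕ) : ℤ)) := by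
  rw [Nat.cast_add, sum_codeg, sum_codeg, deg]
  push_cast
  ring

/-! ### Presentation of `Q` by pairs of multisets -/

/-- A homomorphism out of `⊕ M_r` that depends on a monomial only through its pair of multisets
turns `ψ^{[m]}` into a convolution sum. -/
lemma map_psiIdx {N : ℕ} {α : ℤ} {G : Type*} [AddCommGroup G] (F : T N α →+ G)
    (f : Multiset ℕ → Multiset ℕ → G)
    (hF : ∀ x : (r : ℕ) × Idx N α r,
      F (FreeAbelianGroup.of x) = f (codeg x.2.1) (codeg x.2.2))
    (r m : ℕ) (hm : m < N) (de : Idx N α r) :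
    F (psiIdx N α r m de) = ∑ p ∈ Finset.HasAntidiagonal.antidiagonal (N - 1 - m),
      f (p.1 ::ₘ codeg de.1) (p.2 ::ₘ codeg de.2) := by
  rw [psiIdx, map_sum, ← Finset.Nat.sum_antidiagonal_swap,
    Finset.Nat.sum_antidiagonal_eq_sum_range_succ_mk,
    Finset.sum_range, show (N - 1 - m).succ = N - m by omega]
  refine Finset.sum_congr rfl fun k _ => ?_
  have := k.isLt
  rw [hF]
  simp only [codeg_snoc, Prod.swap]
  congr 2 <;> omega

/-- The class in `Q` of a monomial, as a function of its pair of multisets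
(zero on pairs that do not come from a monomial). -/
def cls (N : ℕ) (α : ℤ) (D E : Multiset ℕ) : Q N α :=
  open Classical in
  if h : ∃ x : (r : ℕ) × Idx N α r, codeg x.2.1 = D ∧ codeg x.2.2 = E then
    QuotientAddGroup.mk' (rels N α) (FreeAbelianGroup.of h.choose)
  else 0

lemma mk_of_eq {N : ℕ} {α : ℤ} (x y : (r : ℕ) × Idx N α r)
    (h1 : codeg x.2.1 = codeg y.2.1) (h2 : codeg x.2.2 = codeg y.2.2) :
    QuotientAddGroup.mk' (rels N α) (FreeAbelianGroup.of x) =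
      QuotientAddGroup.mk' (rels N α) (FreeAbelianGroup.of y) := by
  obtain ⟨r, d, e⟩ := x
  obtain ⟨r', d', e'⟩ := y
  obtain rfl : r = r' := by
    have := congrArg Multiset.card h1
    simp only [card_codeg] at this
    omega
  obtain ⟨σ, rfl⟩ := exists_perm_of_codeg_eq _ _ h1
  obtain ⟨τ, rfl⟩ := exists_perm_of_codeg_eq _ _ h2
  refine (QuotientAddGroup.eq_iff_sub_mem.2 (AddSubgroup.subset_closure ?_)).symm
  refine Or.inl (Or.inl ⟨r, (σ, τ), FreeAbelianGroup.of (d, e), ?_⟩)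
  simp [incl, permMap]

lemma mk_of {N : ℕ} {α : ℤ} (x : (r : ℕ) × Idx N α r) :
    QuotientAddGroup.mk' (rels N α) (FreeAbelianGroup.of x) =
      cls N α (codeg x.2.1) (codeg x.2.2) := by
  have h : ∃ y : (r : ℕ) × Idx N α r,
      codeg y.2.1 = codeg x.2.1 ∧ codeg y.2.2 = codeg x.2.2 := ⟨x, rfl, rfl⟩
  rw [cls, dif_pos h]
  exact mk_of_eq _ _ h.choose_spec.1.symm h.choose_spec.2.symm

/-- The relations of `Q`: with `x(t) = ∑ x_i t^i` and `y(t) = ∑ y_j t^j`, they say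
`x(t) * y(t) = 1` modulo `t^N`. -/
lemma cls_rel {N : ℕ} {α : ℤ} {D E : Multiset ℕ} (h : Valid N α D E) {n : ℕ} (hn : n < N) :
    ∑ p ∈ Finset.HasAntidiagonal.antidiagonal n, cls N α (p.1 ::ₘ D) (p.2 ::ₘ E) =
      if n = 0 then cls N α D E else 0 := by
  obtain ⟨⟨r, de⟩, rfl, rfl⟩ := h.exists_eq
  have key := map_psiIdx (QuotientAddGroup.mk' (rels N α)) (cls N α) mk_of
    r (N - 1 - n) (by omega) de
  rw [show N - 1 - (N - 1 - n) = n by omega] at key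
  rw [← key]
  split_ifs with h0
  · subst h0
    rw [← mk_of]
    refine QuotientAddGroup.eq_iff_sub_mem.2 (AddSubgroup.subset_closure ?_)
    exact Or.inr ⟨r, FreeAbelianGroup.of de, by simp [psi, incl]⟩
  · refine (QuotientAddGroup.eq_zero_iff _).2 (AddSubgroup.subset_closure ?_)
    exact Or.inl (Or.inr ⟨r, N - 1 - n, FreeAbelianGroup.of de, by omega, by simp [psi]⟩)

lemma cls_cons_zero {N : ℕ} (hN : 1 ≤ N) {α : ℤ} {D E : Multiset ℕ} (h : Valid N α D E) :
    cls N α (0 ::ₘ D) (0 ::ₘ E) = cls N α D E := by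
  simpa using cls_rel h (n := 0) (by omega)

lemma cls_add_replicate {N : ℕ} (hN : 1 ≤ N) {α : ℤ} {D E : Multiset ℕ} (h : Valid N α D E)
    (n : ℕ) :
    cls N α (D + Multiset.replicate n 0) (E + Multiset.replicate n 0) = cls N α D E ∧
      Valid N α (D + Multiset.replicate n 0) (E + Multiset.replicate n 0) := by
  induction n with
  | zero => simpa using h
  | succ n ih =>
    simp only [Multiset.replicate_succ, Multiset.add_cons]
    exact ⟨(cls_cons_zero hN ih.2).trans ih.1, ih.2.cons (by omega) (by omega)⟩

/-! ### The polynomial ring and the inverse power series -/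

/-- The indices `1, …, N - 1` of the polynomial generators `z_i = x_i / x_0`. -/
abbrev Vars (N : ℕ) := {i : ℕ // 1 ≤ i ∧ i < N}

/-- The polynomial ring `ℤ[z_1, …, z_{N-1}]`. -/
abbrev ZPoly (N : ℕ) := MvPolynomial (Vars N) ℤ

/-- The variable `z_i` has weight `i`. -/
def wt (N : ℕ) : Vars N → ℕ := Subtype.val

/-- The coefficients of `z(t) = 1 + z_1 t + ⋯ + z_{N-1} t^{N-1}`. -/
def zc (N i : ℕ) : ZPoly N :=
  if i = 0 then 1 else if h : 1 ≤ i ∧ i < N then MvPolynomial.X ⟨i, h⟩ else 0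

/-- The coefficients of the power series `w(t) = 1 / z(t)`. -/
def wc (N j : ℕ) : ZPoly N :=
  PowerSeries.coeff j (PowerSeries.invOfUnit (PowerSeries.mk (zc N)) 1)

lemma zc_zero (N : ℕ) : zc N 0 = 1 := by simp [zc]

lemma zc_val {N : ℕ} (i : Vars N) : zc N i = MvPolynomial.X i := by
  have := i.2
  simp [zc, i.2, show (i : ℕ) ≠ 0 by omega]

lemma sum_zc_wc (N n : ℕ) :
    ∑ p ∈ Finset.HasAntidiagonal.antidiagonal n, zc N p.1 * wc N p.2 = if n = 0 then 1 else 0 := by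
  have h := PowerSeries.mul_invOfUnit (PowerSeries.mk (zc N)) 1 (by
    rw [← PowerSeries.coeff_zero_eq_constantCoeff_apply]; simp [zc_zero])
  have := congrArg (PowerSeries.coeff n) h
  rw [PowerSeries.coeff_mul, PowerSeries.coeff_one] at this
  simpa [wc] using this

lemma wc_zero (N : ℕ) : wc N 0 = 1 := by
  simpa [zc_zero] using sum_zc_wc N 0

lemma wc_succ (N n : ℕ) :
    wc N (n + 1) = -∑ p ∈ Finset.HasAntidiagonal.antidiagonal n, zc N (p.1 + 1) * wc N p.2 := by
  have h := sum_zc_wc N (n + 1)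
  rw [Finset.Nat.antidiagonal_succ] at h
  simp only [Finset.sum_cons, Finset.sum_map] at h
  simp [zc_zero] at h
  exact eq_neg_of_add_eq_zero_left h

lemma zc_homog (N i : ℕ) : (zc N i).IsWeightedHomogeneous (wt N) i := by
  unfold zc
  split_ifs with h h'
  · subst h
    exact MvPolynomial.isWeightedHomogeneous_one _ _
  · exact MvPolynomial.isWeightedHomogeneous_X ℤ (wt N) ⟨i, h'⟩
  · exact MvPolynomial.isWeightedHomogeneous_zero _ _ _

lemma wc_homog (N j : ℕ) : (wc N j).IsWeightedHomogeneous (wt N) j := by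
  induction j using Nat.strong_induction_on with
  | _ j ih =>
    cases j with
    | zero => rw [wc_zero]; exact MvPolynomial.isWeightedHomogeneous_one _ _
    | succ n =>
      rw [wc_succ]
      refine (MvPolynomial.IsWeightedHomogeneous.sum _ _ _ fun p hp => ?_).neg
      have hp' := Finset.HasAntidiagonal.mem_antidiagonal.1 hp
      rw [show n + 1 = (p.1 + 1) + p.2 by omega]
      exact (zc_homog N _).mul (ih _ (by omega))

lemma prod_homog {N : ℕ} (c : ℕ → ZPoly N)
    (hc : ∀ i, (c i).IsWeightedHomogeneous (wt N) i) (D : Multiset ℕ) :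
    ((D.map c).prod).IsWeightedHomogeneous (wt N) D.sum := by
  induction D using Multiset.induction_on with
  | empty => simpa using MvPolynomial.isWeightedHomogeneous_one _ _
  | cons a s ih => simpa using (hc a).mul ih

/-- The image in `ℤ[z_1, …, z_{N-1}]` of the monomial with multisets `D`, `E`. -/
def img (N : ℕ) (D E : Multiset ℕ) : ZPoly N := (D.map (zc N)).prod * (E.map (wc N)).prod

lemma img_homog (N : ℕ) (D E : Multiset ℕ) :
    (img N D E).IsWeightedHomogeneous (wt N) (D.sum + E.sum) :=
  (prod_homog _ (zc_homog N) D).mul (prod_homog _ (wc_homog N) E)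

lemma sum_img (N n : ℕ) (D E : Multiset ℕ) :
    ∑ p ∈ Finset.HasAntidiagonal.antidiagonal n, img N (p.1 ::ₘ D) (p.2 ::ₘ E) =
      if n = 0 then img N D E else 0 := by
  have : ∀ p : ℕ × ℕ, img N (p.1 ::ₘ D) (p.2 ::ₘ E) = (zc N p.1 * wc N p.2) * img N D E := by
    intro p
    simp only [img, Multiset.map_cons, Multiset.prod_cons]
    ring
  simp only [this, ← Finset.sum_mul, sum_zc_wc]
  split_ifs <;> simp

/-! ### The isomorphism of `Q` with the polynomial ring -/

/-- The homomorphism `⊕ M_r → ℤ[z_1, …, z_{N-1}]` specialising `x_0, y_0` to `1`, `x_i` to `z_i`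
and `y_j` to `w_j`. -/
def phiT (N : ℕ) (α : ℤ) : T N α →+ ZPoly N :=
  FreeAbelianGroup.lift fun x => img N (codeg x.2.1) (codeg x.2.2)

lemma phiT_of {N : ℕ} {α : ℤ} (x : (r : ℕ) × Idx N α r) :
    phiT N α (FreeAbelianGroup.of x) = img N (codeg x.2.1) (codeg x.2.2) := by
  simp [phiT]

lemma rels_le_ker {N : ℕ} (hN : 1 ≤ N) (α : ℤ) : rels N α ≤ (phiT N α).ker := by
  have hpsi : ∀ (r m : ℕ) (hm : m < N),
      (phiT N α).comp (psi N α r m) =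
        if N - 1 - m = 0 then (phiT N α).comp (incl N α r) else 0 := by
    intro r m hm
    refine FreeAbelianGroup.lift_ext _ _ fun de => ?_
    have := map_psiIdx (phiT N α) (img N) phiT_of r m hm de
    rw [sum_img] at this
    split_ifs at this ⊢ <;> simpa [psi, incl, phiT_of] using this
  refine (AddSubgroup.closure_le _).2 ?_
  rintro z ((⟨r, σ, v, rfl⟩ | ⟨r, m, v, hm, rfl⟩) | ⟨r, v, rfl⟩)
  · have : (phiT N α).comp ((incl N α r).comp (permMap N α r σ)) =
        (phiT N α).comp (incl N α r) := by
      ext de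
      simp [incl, permMap, phiT_of, codeg_comp_perm]
    simpa [sub_eq_zero] using DFunLike.congr_fun this v
  · have := DFunLike.congr_fun (hpsi r m (by omega)) v
    rw [if_neg (by omega)] at this
    simpa using this
  · have := DFunLike.congr_fun (hpsi r (N - 1) (by omega)) v
    rw [if_pos (by omega)] at this
    simpa [sub_eq_zero] using this

/-- The homomorphism `Q → ℤ[z_1, …, z_{N-1}]` induced by `phiT`. -/
def phi (N : ℕ) (hN : 1 ≤ N) (α : ℤ) : Q N α →+ ZPoly N :=
  QuotientAddGroup.lift (rels N α) (phiT N α) (rels_le_ker hN α)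

lemma phi_cls {N : ℕ} (hN : 1 ≤ N) {α : ℤ} {D E : Multiset ℕ} (h : Valid N α D E) :
    phi N hN α (cls N α D E) = img N D E := by
  obtain ⟨x, rfl, rfl⟩ := h.exists_eq
  rw [← mk_of, ← phiT_of]
  rfl

/-- The multiset of indices of the monomial `z^c`. -/
def ms {N : ℕ} (c : Vars N →₀ ℕ) : Multiset ℕ := (Finsupp.toMultiset c).map Subtype.val

lemma lt_of_mem_ms {N : ℕ} (c : Vars N →₀ ℕ) {i : ℕ} (hi : i ∈ ms c) : 1 ≤ i ∧ i < N := by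
  obtain ⟨j, -, rfl⟩ := Multiset.mem_map.1 hi
  exact j.2

lemma ms_add {N : ℕ} (c c' : Vars N →₀ ℕ) : ms (c + c') = ms c + ms c' := by
  simp [ms]

lemma ms_sum {N : ℕ} (c : Vars N →₀ ℕ) : (ms c).sum = Finsupp.weight (wt N) c := by
  induction c using Finsupp.induction_linear with
  | zero => simp [ms]
  | add c c' h h' => simp [ms_add, h, h']
  | single i n => simp [ms, Multiset.map_nsmul, Multiset.sum_nsmul, Finsupp.weight_single, wt]

lemma ms_injective (N : ℕ) : Function.Injective (ms : (Vars N →₀ ℕ) → Multiset ℕ) :=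
  (Multiset.map_injective Subtype.val_injective).comp
    Multiset.toFinsupp.symm.injective

lemma exists_ms {N : ℕ} (D : Multiset ℕ) (h : ∀ i ∈ D, 1 ≤ i ∧ i < N) :
    ∃ c : Vars N →₀ ℕ, ms c = D := by
  lift D to Multiset (Vars N) using h
  exact ⟨Multiset.toFinsupp D, by simp [ms]⟩

lemma prod_ms {N : ℕ} (c : Vars N →₀ ℕ) :
    ((ms c).map (zc N)).prod = MvPolynomial.monomial c 1 := by
  induction c using Finsupp.induction_linear with
  | zero => simp [ms]
  | add c c' h h' => rw [ms_add, Multiset.map_add, Multiset.prod_add, h, h',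
      MvPolynomial.monomial_mul, one_mul]
  | single i n => simp [ms, Multiset.map_nsmul, Multiset.prod_nsmul, zc_val,
      MvPolynomial.X_pow_eq_monomial]

/-- The homomorphism `ℤ[z_1, …, z_{N-1}] → Q` sending `z^c` to the class of
`x^c x_0^a y_0^{|c| + b}`. -/
def theta (N : ℕ) (α : ℤ) : ZPoly N →+ Q N α :=
  ((MvPolynomial.basisMonomials (Vars N) ℤ).constr ℤ fun c =>
    cls N α (ms c + Multiset.replicate (na α) 0)
      (Multiset.replicate ((ms c).card + nb α) 0)).toAddMonoidHom

lemma theta_monomial {N : ℕ} {α : ℤ} (c : Vars N →₀ ℕ) :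
    theta N α (MvPolynomial.monomial c 1) =
      cls N α (ms c + Multiset.replicate (na α) 0)
        (Multiset.replicate ((ms c).card + nb α) 0) := by
  have := (MvPolynomial.basisMonomials (Vars N) ℤ).constr_basis ℤ (fun c =>
    cls N α (ms c + Multiset.replicate (na α) 0)
      (Multiset.replicate ((ms c).card + nb α) 0)) c
  rwa [MvPolynomial.coe_basisMonomials] at this

lemma valid_ms {N : ℕ} (hN : 1 ≤ N) {α : ℤ} (c : Vars N →₀ ℕ) :
    Valid N α (ms c + Multiset.replicate (na α) 0)
      (Multiset.replicate ((ms c).card + nb α) 0) := by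
  refine ⟨fun i hi => ?_, fun i hi => ?_, ?_⟩
  · rcases Multiset.mem_add.1 hi with h | h
    · exact (lt_of_mem_ms c h).2
    · rw [Multiset.eq_of_mem_replicate h]; omega
  · rw [Multiset.eq_of_mem_replicate hi]; omega
  · simp only [Multiset.card_add, Multiset.card_replicate]
    have := nb_eq α
    omega

lemma phi_theta {N : ℕ} (hN : 1 ≤ N) {α : ℤ} (s : ZPoly N) :
    phi N hN α (theta N α s) = s := by
  have : ((phi N hN α).comp (theta N α)).toIntLinearMap = LinearMap.id :=
    (MvPolynomial.basisMonomials (Vars N) ℤ).ext fun c => by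
      simp only [MvPolynomial.coe_basisMonomials, AddMonoidHom.coe_toIntLinearMap,
        AddMonoidHom.comp_apply, LinearMap.id_apply]
      rw [theta_monomial, phi_cls hN (valid_ms hN c)]
      simp [img, prod_ms, zc_zero, wc_zero]
  exact DFunLike.congr_fun this s

/-- A class without factors `y_j`, `j > 0`, is the image of a monomial: its factors `x_0`, `y_0`
can be cancelled against each other. -/
lemma cls_eq_theta_of_top {N : ℕ} (hN : 1 ≤ N) {α : ℤ} {D : Multiset ℕ} {l : ℕ}
    (h : Valid N α D (Multiset.replicate l 0)) :
    cls N α D (Multiset.replicate l 0) = theta N α (img N D (Multiset.replicate l 0)) := by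
  obtain ⟨c, hc⟩ := exists_ms (N := N) (D.filter (· ≠ 0)) (by
    intro i hi
    rw [Multiset.mem_filter] at hi
    exact ⟨by omega, h.1 i hi.1⟩)
  obtain ⟨k, hk⟩ : ∃ k, D = ms c + Multiset.replicate k 0 := by
    refine ⟨D.count 0, ?_⟩
    rw [hc, ← Multiset.filter_eq', add_comm]
    exact (Multiset.filter_add_not (· = 0) D).symm
  subst hk
  have himg : img N (ms c + Multiset.replicate k 0) (Multiset.replicate l 0) =
      MvPolynomial.monomial c 1 := by
    simp [img, prod_ms, zc_zero, wc_zero]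
  rw [himg, theta_monomial]
  have hcard := h.2.2
  have hab := nb_eq α
  simp only [Multiset.card_add, Multiset.card_replicate] at hcard
  rcases le_total k (na α) with hle | hle
  · obtain ⟨n, hn⟩ := Nat.exists_eq_add_of_le hle
    rw [hn, show (ms c).card + nb α = l + n by omega, Multiset.replicate_add,
      Multiset.replicate_add, ← add_assoc]
    exact (cls_add_replicate hN h n).1.symm
  · obtain ⟨n, rfl⟩ := Nat.exists_eq_add_of_le hle
    obtain rfl : l = (ms c).card + nb α + n := by omega
    rw [Multiset.replicate_add, Multiset.replicate_add _ n, ← add_assoc]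
    exact (cls_add_replicate hN (valid_ms hN c) n).1

/-- Every class is the image of its polynomial. By induction on the weight of `E`: a factor `y_j`
with `j > 0` is rewritten, after inserting `x_0 y_0 = 1`, through
`x_0 y_j = -∑_{i > 0} x_i y_{j-i}`. -/
lemma cls_eq_theta {N : ℕ} (hN : 1 ≤ N) {α : ℤ} {D E : Multiset ℕ} (h : Valid N α D E) :
    cls N α D E = theta N α (img N D E) := by
  induction hs : E.sum using Nat.strong_induction_on generalizing D E with
  | _ s ih =>
    by_cases hE : ∀ j ∈ E, j = 0
    · rw [Multiset.eq_replicate_card.2 hE] at h ⊢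
      exact cls_eq_theta_of_top hN h
    · push Not at hE
      obtain ⟨j, hj, hj0⟩ := hE
      obtain ⟨n, rfl⟩ := Nat.exists_eq_succ_of_ne_zero hj0
      obtain ⟨E', rfl⟩ := Multiset.exists_cons_of_mem hj
      have hjN : n + 1 < N := h.2.1 _ hj
      have hv : Valid N α D (0 ::ₘ E') := by
        obtain ⟨h1, h2, h3⟩ := h
        refine ⟨h1, ?_, ?_⟩
        · intro i hi
          rcases Multiset.mem_cons.1 hi with rfl | hi
          · omega
          · exact h2 i (Multiset.mem_cons_of_mem hi)
        · simpa using h3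
      have e1 := cls_rel hv hjN
      have e2 := congrArg (theta N α) (sum_img N (n + 1) D (0 ::ₘ E'))
      rw [if_neg (by omega), Finset.Nat.antidiagonal_succ, Finset.sum_cons] at e1 e2
      rw [map_add, map_sum, map_zero] at e2
      have e3 : cls N α (0 ::ₘ D) ((n + 1) ::ₘ 0 ::ₘ E') = cls N α D ((n + 1) ::ₘ E') := by
        rw [Multiset.cons_swap, cls_cons_zero hN h]
      have e4 : img N (0 ::ₘ D) ((n + 1) ::ₘ 0 ::ₘ E') = img N D ((n + 1) ::ₘ E') := by
        simp [img, zc_zero, wc_zero]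
      simp only [e3, e4] at e1 e2
      rw [eq_neg_of_add_eq_zero_left e1, eq_neg_of_add_eq_zero_left e2]
      congr 1
      refine Finset.sum_congr rfl fun p hp => ?_
      simp only [Finset.mem_map, Finset.HasAntidiagonal.mem_antidiagonal] at hp
      obtain ⟨q, hq, rfl⟩ := hp
      simp only [Function.Embedding.prodMap, Function.Embedding.coeFn_mk, Prod.map,
        Function.Embedding.refl_apply]
      refine ih _ ?_ (hv.cons (by simp; omega) (by omega)) rfl
      subst hs
      simp
      omega

lemma theta_phi {N : ℕ} (hN : 1 ≤ N) {α : ℤ} (z : Q N α) :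
    theta N α (phi N hN α z) = z := by
  obtain ⟨t, rfl⟩ := QuotientAddGroup.mk'_surjective (rels N α) z
  have : ((theta N α).comp (phi N hN α)).comp (QuotientAddGroup.mk' (rels N α)) =
      QuotientAddGroup.mk' (rels N α) := by
    ext x
    simp only [AddMonoidHom.comp_apply]
    rw [mk_of, phi_cls hN (valid_codeg x), ← cls_eq_theta hN (valid_codeg x)]
  exact DFunLike.congr_fun this t

/-- The isomorphism between `Q` and `ℤ[z_1, …, z_{N-1}]`. -/
def equivQ (N : ℕ) (hN : 1 ≤ N) (α : ℤ) : Q N α ≃+ ZPoly N where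
  toFun := phi N hN α
  invFun := theta N α
  left_inv := theta_phi hN
  right_inv := phi_theta hN
  map_add' := map_add _

/-! ### Gradings -/

lemma Qcomp_eq (N : ℕ) (α j : ℤ) :
    Qcomp N α j = AddSubgroup.closure
      {z | ∃ x : (r : ℕ) × Idx N α r, deg N α x = j ∧
        z = cls N α (codeg x.2.1) (codeg x.2.2)} := by
  rw [Qcomp, Tcomp, AddMonoidHom.map_closure]
  congr 1
  ext z
  constructor
  · rintro ⟨_, ⟨x, hx, rfl⟩, rfl⟩
    exact ⟨x, hx, mk_of x⟩
  · rintro ⟨x, hx, rfl⟩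
    exact ⟨_, ⟨x, hx, rfl⟩, mk_of x⟩

lemma Qcomp_eq_bot (N : ℕ) (α j : ℤ) (hj : ∀ q : ℕ, j ≠ -(2 * (q : ℤ))) :
    Qcomp N α j = ⊥ := by
  rw [Qcomp_eq, AddSubgroup.closure_eq_bot_iff]
  rintro z ⟨x, hx, -⟩
  exact absurd ((deg_eq x).symm.trans hx).symm (hj _)

lemma map_Qcomp {N : ℕ} (hN : 1 ≤ N) (α : ℤ) (q : ℕ) :
    (Qcomp N α (-(2 * (q : ℤ)))).map (equivQ N hN α).toAddMonoidHom =
      (MvPolynomial.weightedHomogeneousSubmodule ℤ (wt N) q).toAddSubgroup := by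
  apply le_antisymm
  · rw [Qcomp_eq, AddMonoidHom.map_closure, AddSubgroup.closure_le]
    rintro _ ⟨_, ⟨x, hx, rfl⟩, rfl⟩
    have h : phi N hN α (cls N α (codeg x.2.1) (codeg x.2.2)) =
      img N (codeg x.2.1) (codeg x.2.2) := phi_cls hN (valid_codeg x)
    have hq : (codeg x.2.1).sum + (codeg x.2.2).sum = q := by
      rw [deg_eq] at hx
      omega
    change phi N hN α _ ∈ _
    rw [h]
    exact hq ▸ img_homog N (codeg x.2.1) (codeg x.2.2)
  · intro s hs
    change s.IsWeightedHomogeneous (wt N) q at hs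
    rw [s.as_sum]
    refine AddSubgroup.sum_mem _ fun c hc => ?_
    have hw : Finsupp.weight (wt N) c = q := hs (MvPolynomial.mem_support_iff.1 hc)
    have : MvPolynomial.monomial c (s.coeff c) =
        (s.coeff c) • (MvPolynomial.monomial c 1 : ZPoly N) := by
      simp [MvPolynomial.smul_monomial]
    rw [this]
    refine AddSubgroup.zsmul_mem _ ?_ _
    refine ⟨theta N α (MvPolynomial.monomial c 1), ?_, phi_theta hN _⟩
    rw [theta_monomial, Qcomp_eq]
    obtain ⟨x, h1, h2⟩ := (valid_ms hN (α := α) c).exists_eq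
    refine AddSubgroup.subset_closure ⟨x, ?_, by rw [h1, h2]⟩
    rw [deg_eq, h1, h2]
    simp [ms_sum, hw]

/-- Monomials of weight `q` correspond to partitions of `q` with parts at most `N - 1`. -/
def monomialEquiv (N : ℕ) (hN : 1 ≤ N) (q : ℕ) :
    {c : Vars N →₀ ℕ // Finsupp.weight (wt N) c = q} ≃
      {p : Nat.Partition q // ∀ x ∈ p.parts, x ≤ N - 1} :=
  Equiv.ofBijective
    (fun c => ⟨⟨ms c.1, fun hi => (lt_of_mem_ms c.1 hi).1, (ms_sum c.1).trans c.2⟩,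
      fun i hi => Nat.le_sub_one_of_lt (lt_of_mem_ms c.1 hi).2⟩) <| by
    constructor
    · intro c c' h
      exact Subtype.ext (ms_injective N (congrArg (fun p => p.1.parts) h))
    · rintro ⟨p, hp⟩
      obtain ⟨c, hc⟩ := exists_ms (N := N) p.parts fun i hi =>
        ⟨p.parts_pos hi, by have := hp i hi; omega⟩
      refine ⟨⟨c, by rw [← ms_sum, hc, p.parts_sum]⟩, ?_⟩
      apply Subtype.ext
      exact Nat.Partition.ext hc

lemma nonempty_homog_equiv {N : ℕ} (hN : 1 ≤ N) (q : ℕ) :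
    Nonempty ((MvPolynomial.weightedHomogeneousSubmodule ℤ (wt N) q).toAddSubgroup ≃+
      (Fin (PN N q) → ℤ)) := by
  have hfin : Finite {p : Nat.Partition q // ∀ x ∈ p.parts, x ≤ N - 1} := inferInstance
  let e1 : {c : Vars N →₀ ℕ | Finsupp.weight (wt N) c = q} ≃ Fin (PN N q) :=
    (monomialEquiv N hN q).trans (Finite.equivFin _)
  have e2 := ((LinearEquiv.ofEq _ _
    (MvPolynomial.weightedHomogeneousSubmodule_eq_finsupp_supported ℤ (wt N) q)).trans
    (AddMonoidAlgebra.supportedEquivFinsupp (S := ℤ) (R := ℤ) _)).trans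
    ((Finsupp.domLCongr e1).trans (Finsupp.linearEquivFunOnFinite ℤ ℤ _))
  exact ⟨e2.toAddEquiv⟩

/-- Q is a free abelian group concentrated in non-positive even
degrees; for every q ≥ 0 its degree −2q component is free abelian of rank P_{N−1}(q);
and in particular Q is independent of the choice of α up to graded isomorphism. -/
theorem stmt9 (N : ℕ) (hN : 1 ≤ N) (α : ℤ) :
    Module.Free ℤ (Q N α) ∧
    (∀ j : ℤ, (∀ q : ℕ, j ≠ -(2 * (q : ℤ))) → Qcomp N α j = ⊥) ∧
    (∀ q : ℕ, Nonempty ((Qcomp N α (-(2 * (q : ℤ)))) ≃+ (Fin (PN N q) → ℤ))) ∧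
    (∀ α' : ℤ, ∃ e : Q N α ≃+ Q N α',
      ∀ j : ℤ, (Qcomp N α j).map e.toAddMonoidHom = Qcomp N α' j) := by
  refine ⟨?_, Qcomp_eq_bot N α, fun q => ?_, fun α' => ?_⟩
  · exact Module.Free.of_equiv (equivQ N hN α).symm.toIntLinearEquiv
  · obtain ⟨e⟩ := nonempty_homog_equiv hN q
    exact ⟨((equivQ N hN α).addSubgroupMap _).trans
      ((AddEquiv.addSubgroupCongr (map_Qcomp hN α q)).trans e)⟩
  · refine ⟨(equivQ N hN α).trans (equivQ N hN α').symm, fun j => ?_⟩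
    by_cases hj : ∀ q : ℕ, j ≠ -(2 * (q : ℤ))
    · rw [Qcomp_eq_bot N α j hj, Qcomp_eq_bot N α' j hj, AddSubgroup.map_bot]
    · push Not at hj
      obtain ⟨q, rfl⟩ := hj
      have h := (map_Qcomp hN α q).trans (map_Qcomp hN α' q).symm
      have h' := congrArg (AddSubgroup.map (equivQ N hN α').symm.toAddMonoidHom) h
      rw [AddSubgroup.map_map, AddSubgroup.map_map] at h'
      refine Eq.trans h' (Eq.trans (congrArg (fun f => AddSubgroup.map f _) ?_)
        (AddSubgroup.map_id _))
      ext x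
      simp

end
end
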